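/- Let n ≥ m ≥ 1 and let λ = (λ_1, ..., λ_k) be a partition of n+m with λ_k = 1. Then [s_λ]X_{GN_{n,m}} = m·[s_{λ∖1}]X_{GN_{n−1,m−1} ⊔ K_1} + (n−m)·[s_{λ∖1}]X_{GN_{n−1,m}} + m·A, where K_1 is a single isolated vertex, ⊔ denotes disjoint union of graphs, the middle term is interpreted as 0 when n = m (its coefficient n−m is then 0), and A = [s_{λ∖1²}]X_{GN_{n−1,m−1}} if λ has at least two trailing parts equal to 1 (i.e., λ_{k−1} = 1), and A = 0 otherwise. -/

import Mathlib

open scoped Classical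

/-! ### Cells and Young diagrams -/

/-- A cell of a Young diagram: `(row, column)`, both 0-indexed, rows from the top. -/
abbrev Cell : Type := ℕ × ℕ

/-- The length of row `i` (0-indexed from the top) of the Young diagram of the
partition `lam`, whose parts are arranged in weakly decreasing order. -/
def rowLen {N : ℕ} (lam : Nat.Partition N) (i : ℕ) : ℕ :=
  ((lam.parts.sort (· ≤ ·)).reverse).getD i 0

/-- The Young diagram of a partition, as a set of cells. -/
def diag {N : ℕ} (lam : Nat.Partition N) : Set Cell :=
  {c : Cell | c.2 < rowLen lam c.1}

/-- The number of rows (the length) of a partition. -/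
def numRows {N : ℕ} (lam : Nat.Partition N) : ℕ := Multiset.card lam.parts

/-! ### Chromatic symmetric functions and Schur functions, as monomial-coefficient
functions.  A formal power series of bounded degree in the commuting variables
`x_0, x_1, x_2, …` is recorded by the map sending an exponent vector `μ : ℕ → ℕ`
(only finitely many nonzero entries ever matter) to the coefficient of the monomial
`∏ i, x_i ^ μ i`.  Colors / tableau entries are positive integers, so the variable
`x_0` is never used. -/

/-- A proper coloring of `G` by positive integers. -/
def IsProperColoring {V : Type*} (G : SimpleGraph V) (f : V → ℕ) : Prop :=
  (∀ v, 0 < f v) ∧ ∀ u v, G.Adj u v → f u ≠ f v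

/-- The coefficient of the monomial `∏ i, x_i ^ μ i` in the chromatic symmetric
function `X_G = ∑_{proper colorings f} ∏_{v} x_{f v}`. -/
noncomputable def XCoeff {V : Type*} [Fintype V] (G : SimpleGraph V) (μ : ℕ → ℕ) : ℚ :=
  Nat.card {f : V → ℕ //
    IsProperColoring G f ∧ ∀ i, Nat.card {v : V // f v = i} = μ i}

/-- A semistandard Young tableau of shape `lam`: positive entries on the diagram
(normalized to `0` off the diagram), weakly increasing along rows, strictly
increasing down columns. -/
def IsSSYT {N : ℕ} (lam : Nat.Partition N) (t : Cell → ℕ) : Prop :=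
  (∀ c, c ∉ diag lam → t c = 0) ∧ (∀ c ∈ diag lam, 0 < t c) ∧
  (∀ i j : ℕ, ((i, j + 1) : Cell) ∈ diag lam → t (i, j) ≤ t (i, j + 1)) ∧
  (∀ i j : ℕ, ((i + 1, j) : Cell) ∈ diag lam → t (i, j) < t (i + 1, j))

/-- The coefficient of the monomial `∏ i, x_i ^ μ i` in the Schur function `s_lam`,
i.e. the number of SSYT of shape `lam` and weight `μ`. -/
noncomputable def schurFn {N : ℕ} (lam : Nat.Partition N) (μ : ℕ → ℕ) : ℚ :=
  Nat.card {t : Cell → ℕ // IsSSYT lam t ∧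
    ∀ i, Nat.card {c : Cell // c ∈ diag lam ∧ t c = i} = μ i}

/-- The coefficient `[s_lam] f` of the Schur function `s_lam` in the (unique, when it
exists) expansion `f = ∑_{ν ⊢ N} c_ν s_ν` of a symmetric function `f`, homogeneous of
degree `N`, given by its monomial coefficients. -/
noncomputable def sCoeff {N : ℕ} (f : (ℕ → ℕ) → ℚ) (lam : Nat.Partition N) : ℚ :=
  if h : ∃ c : Nat.Partition N →₀ ℚ, ∀ μ, f μ = c.sum fun ν a => a * schurFn ν μ
  then h.choose lam else 0

/-! ### Graphs: generalized nets, generalized spiders, disjoint unions -/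

/-- The generalized net `GN_{n,m}`: the complete graph on the body `Fin n`, with a
pendant (`Sum.inr j`) attached to the anchor `Sum.inl j` for each `j : Fin m`. -/
def genNet (n m : ℕ) : SimpleGraph (Fin n ⊕ Fin m) :=
  SimpleGraph.fromRel fun a b =>
    match a, b with
    | Sum.inl _, Sum.inl _ => True
    | Sum.inl i, Sum.inr j => (i : ℕ) = (j : ℕ)
    | Sum.inr _, _ => False

/-- The generalized spider `GS_{n,(2,1^{m-1})}`: the complete graph on the body
`Fin n`, a pendant `Sum.inr (Sum.inl j)` attached to the body vertex `Sum.inl j` for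
each `j : Fin m`, and one extra vertex `Sum.inr (Sum.inr 0)` (the special pendant)
attached to the pendant `Sum.inr (Sum.inl 0)`, so that the body vertex `0` (the
special anchor) carries an attached path on two vertices. -/
def genSpider2 (n m : ℕ) : SimpleGraph (Fin n ⊕ (Fin m ⊕ Fin 1)) :=
  SimpleGraph.fromRel fun a b =>
    match a, b with
    | Sum.inl _, Sum.inl _ => True
    | Sum.inl i, Sum.inr (Sum.inl j) => (i : ℕ) = (j : ℕ)
    | Sum.inr (Sum.inl j), Sum.inr (Sum.inr _) => (j : ℕ) = 0
    | _, _ => False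

/-- Disjoint union of two simple graphs. -/
def disjUnion {α β : Type*} (G : SimpleGraph α) (H : SimpleGraph β) :
    SimpleGraph (α ⊕ β) :=
  SimpleGraph.fromRel fun a b =>
    match a, b with
    | Sum.inl a, Sum.inl b => G.Adj a b
    | Sum.inr a, Sum.inr b => H.Adj a b
    | _, _ => False

/-- The one-vertex graph `K_1`. -/
def K1 : SimpleGraph (Fin 1) := ⊥

/-- The path (= complete graph) on two vertices `P_2`. -/
def P2 : SimpleGraph (Fin 2) := ⊤

/-! ### Operations on partitions -/

/-- `removeOnes lam t` is the partition `lam ∖ 1^t` obtained by deleting `t` parts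
equal to `1` from `lam` (junk value if `lam` has fewer than `t` parts equal to `1`). -/
def removeOnes {N : ℕ} (lam : Nat.Partition N) (t : ℕ) : Nat.Partition (N - t) :=
  if h : Multiset.replicate t 1 ≤ lam.parts then
    { parts := lam.parts - Multiset.replicate t 1
      parts_pos := fun hx =>
        lam.parts_pos (Multiset.mem_of_le (tsub_le_self) hx)
      parts_sum := by
        have h1 : (lam.parts - Multiset.replicate t 1) + Multiset.replicate t 1
            = lam.parts := tsub_add_cancel_of_le h
        have h2 := congrArg Multiset.sum h1
        rw [Multiset.sum_add, Multiset.sum_replicate, lam.parts_sum] at h2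
        simp only [smul_eq_mul, mul_one] at h2
        omega }
  else Nat.Partition.indiscrete (N - t)

/-- The partition `(2^a, 1^b)` of `2*a + b`. -/
def twoOne (a b : ℕ) : Nat.Partition (2 * a + b) where
  parts := Multiset.replicate a 2 + Multiset.replicate b 1
  parts_pos := by
    intro i hi
    rw [Multiset.mem_add] at hi
    rcases hi with hi | hi <;> · rw [Multiset.eq_of_mem_replicate hi]; omega
  parts_sum := by
    rw [Multiset.sum_add, Multiset.sum_replicate, Multiset.sum_replicate]
    simp only [smul_eq_mul, mul_one]
    omega

/-! ### Special rim hook `G`-tabloids -/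

/-- Two cells are adjacent if they share an edge. -/
def cellAdj (c d : Cell) : Prop :=
  (c.1 = d.1 ∧ (c.2 + 1 = d.2 ∨ d.2 + 1 = c.2)) ∨
  (c.2 = d.2 ∧ (c.1 + 1 = d.1 ∨ d.1 + 1 = c.1))

/-- A set of cells is (the diagram of) a Young diagram if it is closed under
decreasing either coordinate. -/
def IsYoungDiag (D : Set Cell) : Prop :=
  ∀ i j i' j' : ℕ, ((i, j) : Cell) ∈ D → i' ≤ i → j' ≤ j → ((i', j') : Cell) ∈ D

/-- A set of cells is connected (via edge-adjacency, within the set). -/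
def CellConnected (S : Set Cell) : Prop :=
  ∀ c ∈ S, ∀ d ∈ S, Relation.ReflTransGen (fun a b => a ∈ S ∧ b ∈ S ∧ cellAdj a b) c d

/-- A border strip (= rim hook, as a set of cells): nonempty, connected, and
containing no 2×2 square of cells. -/
def IsBorderStrip (H : Set Cell) : Prop :=
  H.Nonempty ∧ CellConnected H ∧
    ∀ i j : ℕ, ¬(((i, j) : Cell) ∈ H ∧ ((i + 1, j) : Cell) ∈ H ∧
      ((i, j + 1) : Cell) ∈ H ∧ ((i + 1, j + 1) : Cell) ∈ H)

/-- `H` is a rim hook of the Young diagram `D`: a border strip contained in `D`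
whose removal leaves a Young diagram. -/
def IsRimHookOf (D H : Set Cell) : Prop :=
  H ⊆ D ∧ IsBorderStrip H ∧ IsYoungDiag (D \ H)

/-- `IsRemovalSeq L D` says that the sets of cells in the list `L` may be removed
successively from the diagram `D`, each being a rim hook of what remains, with
nothing left at the end. -/
def IsRemovalSeq : List (Set Cell) → Set Cell → Prop
  | [], D => D = ∅
  | H :: L, D => IsRimHookOf D H ∧ IsRemovalSeq L (D \ H)

/-- A special rim hook `G`-tabloid of shape `lam`, with respect to an order `r` on
the vertices of `G`: the cells of the diagram of `lam` are filled bijectively with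
the vertices of `G` (vertex `v` goes in cell `pos v`), and the diagram is tiled by
rim hooks, successively removable, each meeting the first column.  The rim hooks are
recorded by the labelling `hk`, which assigns to each vertex the topmost row in which
its rim hook meets the first column.  The vertices in each rim hook form a stable set
of `G` and, read from the rim hook's (bottom) cell in the first column — i.e. in
increasing order of the diagonal index `column − row` — they increase with respect
to `r`. -/
structure SRHGTabloid {V : Type*} (G : SimpleGraph V) (r : V → V → Prop)
    {N : ℕ} (lam : Nat.Partition N) where
  /-- the cell occupied by each vertex -/
  pos : V → Cell
  /-- the label of the rim hook containing each vertex: the topmost row in which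
  that rim hook meets the first column -/
  hk : V → ℕ
  pos_inj : Function.Injective pos
  pos_range : Set.range pos = diag lam
  hk_mem : ∀ v, ((hk v, 0) : Cell) ∈ pos '' {u | hk u = hk v}
  hk_min : ∀ v i, ((i, 0) : Cell) ∈ pos '' {u | hk u = hk v} → hk v ≤ i
  removal : ∃ L : List ℕ, L.Nodup ∧ (∀ i, i ∈ L ↔ ∃ v, hk v = i) ∧
    IsRemovalSeq (L.map fun i => pos '' {u | hk u = i}) (diag lam)
  stable : ∀ u v, hk u = hk v → u ≠ v → ¬G.Adj u v
  increasing : ∀ u v, hk u = hk v →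
    ((pos u).2 : ℤ) - ((pos u).1 : ℤ) < ((pos v).2 : ℤ) - ((pos v).1 : ℤ) → r u v

/-- The sign of a special rim hook `G`-tabloid: `(-1)` to the total number of north
steps, where a rim hook spanning `k` rows contributes `k - 1` north steps. -/
noncomputable def tabSign {V : Type*} {G : SimpleGraph V} {r : V → V → Prop}
    {N : ℕ} {lam : Nat.Partition N} (T : SRHGTabloid G r lam) : ℤ :=
  (-1) ^ ∑ i ∈ Finset.range N,
    ({a : ℕ | ∃ v, T.hk v = i ∧ (T.pos v).1 = a}.ncard - 1)

/-- The cells of the head of a tabloid of shape `lam`: the rows of length `≥ 2`. -/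
def headCells {N : ℕ} (lam : Nat.Partition N) : Set Cell :=
  {c : Cell | c ∈ diag lam ∧ 2 ≤ rowLen lam c.1}

/-- The cells of the tail of a tabloid of shape `lam`: the rows of length `1`. -/
def tailCells {N : ℕ} (lam : Nat.Partition N) : Set Cell :=
  {c : Cell | c ∈ diag lam ∧ rowLen lam c.1 = 1}

/-- Two special rim hook `G`-tabloids have the same head: the same cells of the head
are occupied by the same vertices, and the rim hook structure restricted to the head
agrees. -/
def SameHead {V : Type*} {G : SimpleGraph V} {r : V → V → Prop} {N : ℕ}
    {lam : Nat.Partition N} (T T' : SRHGTabloid G r lam) : Prop :=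
  (∀ v, T.pos v ∈ headCells lam ↔ T'.pos v ∈ headCells lam) ∧
  (∀ v, T.pos v ∈ headCells lam → T.pos v = T'.pos v) ∧
  (∀ u v, T.pos u ∈ headCells lam → T.pos v ∈ headCells lam →
    (T.hk u = T.hk v ↔ T'.hk u = T'.hk v))

/-!
A symmetric function is represented by its Schur coefficients, on which the adjoints `h_a^⊥` and
`e_a^⊥` of the multiplications by `h_a` and `e_a` act by adding horizontal and vertical strips. The
chromatic symmetric functions of the induced subgraphs of `G` are characterized by
`h_a^⊥ X_{G[W]} = ∑_S X_{G[W \ S]}`, where `S` runs over the stable sets of size `a` in `W`.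

Let `G` be a net with body `K`, set of pendants `P` and anchor map `α`, and let `D_j` be the sum of
`X_{G \ J}` over the subsets `J ⊆ P` of size `j`. By duality of `h` and `e`, `D_k` is the sum of
`e_i^⊥ R_r` over `i + r = k`, where `R_r` is the sum of `(-1)^q h_q^⊥ D_j` over `q + j = r`. A
sign-reversing involution that moves a pendant shows that `R_0 = X_G`, `R_1 = -∑_{u ∈ K} X_{G \ u}`,
`R_2 = -∑_{p ∈ P} X_{G \ {p, α(p)}}`, and `R_r = 0` for `r ≥ 3`. On the other hand `D_k` vanishes on
the diagrams with fewer than `k` rows, because `G \ J` contains the clique `K` and `#K ≥ #P`. On a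
diagram with at most `a` rows, a vertical strip of `a + 1` cells extends past the last row, so
`e_{a+1}^⊥ X_G` is `e_a^⊥` of the coefficients of `X_G` at the diagrams with an added row of length
one. These values for all `a` determine those coefficients, and so they give the recurrence.
-/

namespace ChromaticSchur

open Finset

/-! ### Young diagrams -/

section YoungDiagram

variable {κ ν : YoungDiagram}

lemma rowLen_eq_of_forall_mem_iff {i n : ℕ} (h : ∀ j, (i, j) ∈ κ ↔ j < n) : κ.rowLen i = n :=
  eq_of_forall_lt_iff fun j => YoungDiagram.mem_iff_lt_rowLen.symm.trans (h j)

lemma diagram_ext_rowLen (h : ∀ i, κ.rowLen i = ν.rowLen i) : κ = ν :=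
  SetLike.ext fun c => by
    rw [← Prod.mk.eta (p := c), YoungDiagram.mem_iff_lt_rowLen, YoungDiagram.mem_iff_lt_rowLen, h]

lemma diagram_le_iff_rowLen_le : ν ≤ κ ↔ ∀ i, ν.rowLen i ≤ κ.rowLen i := by
  simp only [SetLike.le_def, Prod.forall, YoungDiagram.mem_iff_lt_rowLen]
  exact forall_congr' fun i => forall_lt_iff_le

lemma rowLen_eq_zero_of_colLen_le {i : ℕ} (h : κ.colLen 0 ≤ i) : κ.rowLen i = 0 := by
  by_contra hi
  have := YoungDiagram.mem_iff_lt_colLen.1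
    (YoungDiagram.mem_iff_lt_rowLen.2 (Nat.pos_of_ne_zero hi))
  omega

lemma rowLen_zero_mono (h : ν ≤ κ) : ν.rowLen 0 ≤ κ.rowLen 0 := diagram_le_iff_rowLen_le.1 h 0

lemma colLen_zero_mono (h : ν ≤ κ) : ν.colLen 0 ≤ κ.colLen 0 := by
  simpa using rowLen_zero_mono (YoungDiagram.transpose_mono h)

lemma card_eq_sum_rowLen {B : ℕ} (hB : κ.colLen 0 ≤ B) :
    κ.card = ∑ i ∈ range B, κ.rowLen i := by
  simp only [YoungDiagram.rowLen_eq_card]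
  refine card_eq_sum_card_fiberwise fun c hc => ?_
  have : c.1 < κ.colLen 0 := YoungDiagram.mem_iff_lt_colLen.1 (κ.up_left_mem le_rfl c.2.zero_le hc)
  exact mem_range.2 (this.trans_le hB)

@[simp]
lemma card_transpose (κ : YoungDiagram) : κ.transpose.card = κ.card := by
  simp [YoungDiagram.card, YoungDiagram.transpose]

lemma rowLen_zero_le_card (κ : YoungDiagram) : κ.rowLen 0 ≤ κ.card := by
  rw [κ.rowLen_eq_card]
  exact card_le_card (filter_subset _ _)

@[simp]
lemma card_bot : (⊥ : YoungDiagram).card = 0 := rfl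

lemma card_eq_zero_of_rowLen_zero_eq_zero (h : κ.rowLen 0 = 0) : κ.card = 0 := by
  rw [card_eq_sum_rowLen le_rfl]
  exact sum_eq_zero fun i _ => Nat.le_zero.1 ((κ.rowLen_anti 0 i i.zero_le).trans h.le)

lemma card_eq_zero_of_colLen_zero_eq_zero (h : κ.colLen 0 = 0) : κ.card = 0 := by
  rw [← card_transpose]
  exact card_eq_zero_of_rowLen_zero_eq_zero (by simpa)

lemma eq_of_le_of_card_le (h : ν ≤ κ) (hcard : κ.card ≤ ν.card) : ν = κ :=
  YoungDiagram.ext (eq_of_subset_of_card_le h hcard)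

lemma card_le_card_of_le (h : ν ≤ κ) : ν.card ≤ κ.card := card_le_card h

lemma eq_bot_of_card_eq_zero (h : κ.card = 0) : κ = ⊥ :=
  YoungDiagram.ext (card_eq_zero.1 h)

lemma finite_setOf_card_eq (N : ℕ) : {κ : YoungDiagram | κ.card = N}.Finite := by
  refine Set.Finite.of_finite_image (f := YoungDiagram.cells)
    ((range N ×ˢ range N).powerset.finite_toSet.subset ?_) fun _ _ _ _ => YoungDiagram.ext
  rintro _ ⟨κ, rfl, rfl⟩
  simp only [coe_powerset, Set.mem_preimage, Set.mem_powerset_iff, coe_subset]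
  rintro ⟨i, j⟩ hc
  have hj : j < κ.rowLen 0 := YoungDiagram.mem_iff_lt_rowLen.1 (κ.up_left_mem i.zero_le le_rfl hc)
  have hi : i < κ.transpose.rowLen 0 := by
    rw [YoungDiagram.rowLen_transpose]
    exact YoungDiagram.mem_iff_lt_colLen.1 (κ.up_left_mem le_rfl j.zero_le hc)
  have := rowLen_zero_le_card κ
  have := rowLen_zero_le_card κ.transpose
  rw [card_transpose] at this
  simp only [mem_product, mem_range]
  omega

/-- The Young diagrams with `N` cells. -/
noncomputable def diagramsOfCard (N : ℕ) : Finset YoungDiagram := (finite_setOf_card_eq N).toFinset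

@[simp]
lemma mem_diagramsOfCard {N : ℕ} : κ ∈ diagramsOfCard N ↔ κ.card = N := by simp [diagramsOfCard]

/-- The Young diagram obtained by deleting the first row. -/
def tail (κ : YoungDiagram) : YoungDiagram where
  cells := {c ∈ κ.cells | (c.1 + 1, c.2) ∈ κ}
  isLowerSet := by
    rintro ⟨i, j⟩ ⟨i', j'⟩ ⟨hi, hj⟩ hc
    simp only [coe_filter, Set.mem_ofPred_eq, YoungDiagram.mem_cells] at hc ⊢
    exact ⟨κ.up_left_mem hi hj hc.1, κ.up_left_mem (Nat.succ_le_succ hi) hj hc.2⟩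

lemma mem_tail {i j : ℕ} : (i, j) ∈ tail κ ↔ (i + 1, j) ∈ κ := by
  rw [← YoungDiagram.mem_cells]
  simp only [tail, mem_filter, YoungDiagram.mem_cells, and_iff_right_iff_imp]
  exact κ.up_left_mem i.le_succ le_rfl

@[simp]
lemma rowLen_tail (κ : YoungDiagram) (i : ℕ) : (tail κ).rowLen i = κ.rowLen (i + 1) :=
  rowLen_eq_of_forall_mem_iff fun _ => mem_tail.trans YoungDiagram.mem_iff_lt_rowLen

@[simp]
lemma colLen_zero_tail (κ : YoungDiagram) : (tail κ).colLen 0 = κ.colLen 0 - 1 :=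
  eq_of_forall_lt_iff fun i => by
    rw [← YoungDiagram.mem_iff_lt_colLen, mem_tail, YoungDiagram.mem_iff_lt_colLen]
    omega

lemma rowLen_zero_add_card_tail (κ : YoungDiagram) : κ.rowLen 0 + (tail κ).card = κ.card := by
  rw [card_eq_sum_rowLen (κ := κ) (B := κ.colLen 0 + 1) (by omega), sum_range_succ',
    card_eq_sum_rowLen (κ := tail κ) (B := κ.colLen 0) (by simp), add_comm]
  simp

/-! ### Strips -/

/-- `κ / ν` is a horizontal strip: it has at most one cell in each column. -/
structure IsHorizontalStrip (κ ν : YoungDiagram) : Prop where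
  le : ν ≤ κ
  above_mem : ∀ {i j : ℕ}, (i + 1, j) ∈ κ → (i, j) ∈ ν

/-- `κ / ν` is a vertical strip: it has at most one cell in each row. -/
def IsVerticalStrip (κ ν : YoungDiagram) : Prop :=
  IsHorizontalStrip κ.transpose ν.transpose

lemma isHorizontalStrip_iff_rowLen : IsHorizontalStrip κ ν ↔
    ∀ i, ν.rowLen i ≤ κ.rowLen i ∧ κ.rowLen (i + 1) ≤ ν.rowLen i := by
  rw [forall_and, ← diagram_le_iff_rowLen_le]
  refine ⟨fun h => ⟨h.le, fun i => ?_⟩, fun h => ⟨h.1, fun {i j} hc => ?_⟩⟩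
  · refine forall_lt_iff_le.1 fun j hj => ?_
    exact YoungDiagram.mem_iff_lt_rowLen.1 (h.above_mem (YoungDiagram.mem_iff_lt_rowLen.2 hj))
  · rw [YoungDiagram.mem_iff_lt_rowLen] at hc ⊢
    exact hc.trans_le (h.2 i)

lemma isVerticalStrip_iff : IsVerticalStrip κ ν ↔
    ν ≤ κ ∧ ∀ i j, (i, j + 1) ∈ κ → (i, j) ∈ ν := by
  refine ⟨fun h => ⟨YoungDiagram.transpose_le_iff.1 h.le, fun i j hc => ?_⟩,
    fun h => ⟨YoungDiagram.transpose_mono h.1, fun {i j} hc => ?_⟩⟩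
  · simpa using h.above_mem (i := j) (j := i) (by simpa using hc)
  · simpa using h.2 j i (by simpa using hc)

lemma isHorizontalStrip_tail (κ : YoungDiagram) : IsHorizontalStrip κ (tail κ) :=
  isHorizontalStrip_iff_rowLen.2 fun i => by
    simpa using κ.rowLen_anti i (i + 1) i.le_succ

lemma isHorizontalStrip_self (κ : YoungDiagram) : IsHorizontalStrip κ κ :=
  ⟨le_rfl, fun hc => κ.up_left_mem (Nat.le_succ _) le_rfl hc⟩

lemma IsHorizontalStrip.colLen_zero_le (h : IsHorizontalStrip κ ν) :
    κ.colLen 0 ≤ ν.colLen 0 + 1 := by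
  by_contra hlt
  have := YoungDiagram.mem_iff_lt_colLen.1 (h.above_mem (YoungDiagram.mem_iff_lt_colLen.2
    (show ν.colLen 0 + 1 < κ.colLen 0 by omega)))
  omega

end YoungDiagram

section StripOperators

/-- A function `c : YoungDiagram → ℚ` stands for the formal Schur expansion `∑ κ, c κ • s_κ`. For
`R` the relation of being a horizontal (vertical) strip, this is the operator adjoint to
multiplication by the complete (elementary) symmetric function of degree `a`. -/
noncomputable def stripPerp (R : YoungDiagram → YoungDiagram → Prop) (a : ℕ) :
    (YoungDiagram → ℚ) →ₗ[ℚ] (YoungDiagram → ℚ) where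
  toFun c ν := ∑ κ ∈ diagramsOfCard (ν.card + a) with R κ ν, c κ
  map_add' c d := by ext ν; simp [sum_add_distrib]
  map_smul' r c := by ext ν; simp [mul_sum]

/-- The adjoint of multiplication by the complete symmetric function `h_a`. -/
noncomputable abbrev hPerp (a : ℕ) : (YoungDiagram → ℚ) →ₗ[ℚ] (YoungDiagram → ℚ) :=
  stripPerp IsHorizontalStrip a

/-- The adjoint of multiplication by the elementary symmetric function `e_a`. -/
noncomputable abbrev ePerp (a : ℕ) : (YoungDiagram → ℚ) →ₗ[ℚ] (YoungDiagram → ℚ) :=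
  stripPerp IsVerticalStrip a

lemma stripPerp_apply (R : YoungDiagram → YoungDiagram → Prop) (a : ℕ) (c : YoungDiagram → ℚ)
    (ν : YoungDiagram) :
    stripPerp R a c ν = ∑ κ ∈ diagramsOfCard (ν.card + a) with R κ ν, c κ := rfl

lemma hPerp_zero (c : YoungDiagram → ℚ) : hPerp 0 c = c := by
  ext ν
  have : ({κ ∈ diagramsOfCard (ν.card + 0) | IsHorizontalStrip κ ν}) = {ν} := by
    ext κ
    simp only [mem_filter, mem_diagramsOfCard, mem_singleton, add_zero]
    refine ⟨fun h => (eq_of_le_of_card_le h.2.le h.1.le).symm, ?_⟩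
    rintro rfl
    exact ⟨rfl, isHorizontalStrip_self κ⟩
  rw [stripPerp_apply, this, sum_singleton]

lemma stripPerp_stripPerp_apply (R R' : YoungDiagram → YoungDiagram → Prop) (a b : ℕ)
    (c : YoungDiagram → ℚ) (ρ : YoungDiagram) :
    stripPerp R a (stripPerp R' b c) ρ = ∑ κ ∈ diagramsOfCard (ρ.card + (a + b)),
      #{ν ∈ diagramsOfCard (ρ.card + a) | R' κ ν ∧ R ν ρ} * c κ := by
  simp only [stripPerp_apply, card_filter, Nat.cast_sum, sum_mul, Nat.cast_ite, Nat.cast_one,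
    Nat.cast_zero, ite_mul, one_mul, zero_mul]
  rw [sum_filter, sum_comm]
  refine sum_congr rfl fun ν hν => ?_
  rw [mem_diagramsOfCard.1 hν, ← add_assoc, sum_filter]
  split_ifs with h <;> simp [h]

lemma ePerp_apply_eq_hPerp_transpose (a : ℕ) (c : YoungDiagram → ℚ) (ν : YoungDiagram) :
    ePerp a c ν = hPerp a (fun κ => c κ.transpose) ν.transpose := by
  rw [stripPerp_apply, stripPerp_apply]
  refine sum_nbij' YoungDiagram.transpose YoungDiagram.transpose ?_ ?_ ?_ ?_ ?_ <;>
    simp only [mem_filter, mem_diagramsOfCard, card_transpose] <;>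
    simp +contextual [IsVerticalStrip]

lemma ePerp_zero (c : YoungDiagram → ℚ) : ePerp 0 c = c := by
  ext κ
  rw [ePerp_apply_eq_hPerp_transpose, hPerp_zero, YoungDiagram.transpose_transpose]

end StripOperators

/-! ### Complete operators commute -/

section Commute

variable {κ ν ρ : YoungDiagram}

/-- The Young diagram with a given set of cells (junk value `⊥` if there is none). -/
noncomputable def diagramOfCells (s : Finset (ℕ × ℕ)) : YoungDiagram :=
  if h : IsLowerSet (s : Set (ℕ × ℕ)) then ⟨s, h⟩ else ⊥

lemma mem_diagramOfCells {s : Finset (ℕ × ℕ)} (h : IsLowerSet (s : Set (ℕ × ℕ))) {x : ℕ × ℕ} :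
    x ∈ diagramOfCells s ↔ x ∈ s := by
  rw [diagramOfCells, dif_pos h, YoungDiagram.mem_mk]

/-- The diagram with row lengths `f` (if it exists), as a subdiagram of `κ`. -/
noncomputable def subdiagramOfRowLen (κ : YoungDiagram) (f : ℕ → ℕ) : YoungDiagram :=
  diagramOfCells {c ∈ κ.cells | c.2 < f c.1}

lemma rowLen_subdiagramOfRowLen {f : ℕ → ℕ} (hf : Antitone f) (hκ : ∀ i, f i ≤ κ.rowLen i)
    (i : ℕ) : (subdiagramOfRowLen κ f).rowLen i = f i := by
  refine rowLen_eq_of_forall_mem_iff fun j => ?_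
  rw [subdiagramOfRowLen, mem_diagramOfCells]
  · simp only [mem_filter, YoungDiagram.mem_cells, YoungDiagram.mem_iff_lt_rowLen,
      and_iff_right_iff_imp]
    exact fun h => h.trans_le (hκ i)
  · rintro ⟨i, j⟩ ⟨i', j'⟩ ⟨hi, hj⟩ hc
    simp only [coe_filter, Set.mem_ofPred_eq, YoungDiagram.mem_cells] at hc ⊢
    exact ⟨κ.up_left_mem hi hj hc.1, (hj.trans_lt hc.2).trans_le (hf hi)⟩

/-- The least length of row `i` of a diagram `ν` such that `κ / ν` and `ν / ρ` are horizontal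
strips. -/
def minRowLen (κ ρ : YoungDiagram) (i : ℕ) : ℕ := max (κ.rowLen (i + 1)) (ρ.rowLen i)

/-- The greatest length of row `i` of a diagram `ν` such that `κ / ν` and `ν / ρ` are horizontal
strips. -/
def maxRowLen (κ ρ : YoungDiagram) : ℕ → ℕ
  | 0 => κ.rowLen 0
  | i + 1 => min (κ.rowLen (i + 1)) (ρ.rowLen i)

lemma isHorizontalStrip_and_isHorizontalStrip_iff :
    IsHorizontalStrip κ ν ∧ IsHorizontalStrip ν ρ ↔
      ∀ i, minRowLen κ ρ i ≤ ν.rowLen i ∧ ν.rowLen i ≤ maxRowLen κ ρ i := by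
  simp only [isHorizontalStrip_iff_rowLen, ← forall_and, minRowLen, max_le_iff]
  constructor
  · rintro h (_ | i)
    · exact ⟨⟨(h 0).1.2, (h 0).2.1⟩, (h 0).1.1⟩
    · exact ⟨⟨(h _).1.2, (h _).2.1⟩, le_min (h _).1.1 (h i).2.2⟩
  · intro h i
    have hi : ν.rowLen i ≤ κ.rowLen i := by
      cases i with
      | zero => exact (h 0).2
      | succ i => exact (h _).2.trans (min_le_left _ _)
    exact ⟨⟨hi, (h i).1.1⟩, (h i).1.2, (h (i + 1)).2.trans (min_le_right _ _)⟩

/-- Reflection of `ν` in the interval of diagrams between which it is confined by the condition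
that `κ / ν` and `ν / ρ` are horizontal strips: the Bender–Knuth involution. -/
noncomputable def reflect (κ ρ ν : YoungDiagram) : YoungDiagram :=
  subdiagramOfRowLen κ fun i => minRowLen κ ρ i + maxRowLen κ ρ i - ν.rowLen i

lemma rowLen_reflect (h : IsHorizontalStrip κ ν ∧ IsHorizontalStrip ν ρ) (i : ℕ) :
    (reflect κ ρ ν).rowLen i = minRowLen κ ρ i + maxRowLen κ ρ i - ν.rowLen i := by
  rw [isHorizontalStrip_and_isHorizontalStrip_iff] at h
  refine rowLen_subdiagramOfRowLen (antitone_nat_of_succ_le fun i => ?_) (fun i => ?_) i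
  · have hi : maxRowLen κ ρ (i + 1) ≤ minRowLen κ ρ i := (min_le_right _ _).trans (le_max_right _ _)
    have := h i
    have := h (i + 1)
    omega
  · have hi : maxRowLen κ ρ i ≤ κ.rowLen i := by
      cases i with
      | zero => exact le_rfl
      | succ i => exact min_le_left _ _
    have := h i
    omega

lemma isHorizontalStrip_reflect (h : IsHorizontalStrip κ ν ∧ IsHorizontalStrip ν ρ) :
    IsHorizontalStrip κ (reflect κ ρ ν) ∧ IsHorizontalStrip (reflect κ ρ ν) ρ := by
  rw [isHorizontalStrip_and_isHorizontalStrip_iff]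
  intro i
  rw [rowLen_reflect h]
  have := isHorizontalStrip_and_isHorizontalStrip_iff.1 h i
  omega

lemma reflect_reflect (h : IsHorizontalStrip κ ν ∧ IsHorizontalStrip ν ρ) :
    reflect κ ρ (reflect κ ρ ν) = ν := by
  refine diagram_ext_rowLen fun i => ?_
  rw [rowLen_reflect (isHorizontalStrip_reflect h), rowLen_reflect h]
  have := isHorizontalStrip_and_isHorizontalStrip_iff.1 h i
  omega

lemma sum_minRowLen_add_maxRowLen (h : ρ ≤ κ) {B : ℕ} (hB : κ.colLen 0 ≤ B) :
    ∑ i ∈ range (B + 1), (minRowLen κ ρ i + maxRowLen κ ρ i) = κ.card + ρ.card := by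
  have hlast : minRowLen κ ρ B = 0 := by
    rw [minRowLen, rowLen_eq_zero_of_colLen_le (hB.trans B.le_succ),
      rowLen_eq_zero_of_colLen_le ((colLen_zero_mono h).trans hB), max_self]
  have hmid (i : ℕ) :
      minRowLen κ ρ i + maxRowLen κ ρ (i + 1) = κ.rowLen (i + 1) + ρ.rowLen i :=
    max_add_min _ _
  rw [sum_add_distrib, sum_range_succ, sum_range_succ' (maxRowLen κ ρ), hlast, add_zero,
    ← add_assoc, ← sum_add_distrib, sum_congr rfl fun i _ => hmid i, sum_add_distrib,
    card_eq_sum_rowLen (hB.trans B.le_succ), sum_range_succ',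
    card_eq_sum_rowLen ((colLen_zero_mono h).trans hB)]
  simp only [maxRowLen]
  omega

lemma card_reflect_add_card (h : IsHorizontalStrip κ ν ∧ IsHorizontalStrip ν ρ) :
    (reflect κ ρ ν).card + ν.card = κ.card + ρ.card := by
  have hB {σ : YoungDiagram} (hσ : σ ≤ κ) : σ.colLen 0 ≤ κ.colLen 0 + 1 :=
    (colLen_zero_mono hσ).trans (Nat.le_succ _)
  rw [← sum_minRowLen_add_maxRowLen (h.2.le.trans h.1.le) le_rfl, card_eq_sum_rowLen (hB h.1.le),
    card_eq_sum_rowLen (hB (isHorizontalStrip_reflect h).1.le), ← sum_add_distrib]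
  refine sum_congr rfl fun i _ => ?_
  rw [rowLen_reflect h]
  have := isHorizontalStrip_and_isHorizontalStrip_iff.1 h i
  omega

lemma hPerp_comm (a b : ℕ) (c : YoungDiagram → ℚ) :
    hPerp a (hPerp b c) = hPerp b (hPerp a c) := by
  ext ρ
  rw [stripPerp_stripPerp_apply, stripPerp_stripPerp_apply, add_comm b a]
  refine sum_congr rfl fun κ hκ => ?_
  rw [mem_diagramsOfCard] at hκ
  congr 2
  refine card_nbij' (reflect κ ρ) (reflect κ ρ) ?_ ?_ ?_ ?_ <;> intro ν hν <;>
    simp only [coe_filter, Set.mem_ofPred_eq, mem_diagramsOfCard] at hν ⊢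
  · exact ⟨by have := card_reflect_add_card hν.2; omega, isHorizontalStrip_reflect hν.2⟩
  · exact ⟨by have := card_reflect_add_card hν.2; omega, isHorizontalStrip_reflect hν.2⟩
  · exact reflect_reflect hν.2
  · exact reflect_reflect hν.2

end Commute

/-! ### Duality of complete and elementary operators -/

section Duality

variable {κ ν ρ : YoungDiagram} {x : ℕ × ℕ}

/-- Adding the cell `x` to `ν` if it is absent, removing it if it is present. -/
noncomputable def toggleCell (x : ℕ × ℕ) (ν : YoungDiagram) : YoungDiagram :=
  diagramOfCells (symmDiff ν.cells {x})

/-- The conditions under which toggling the cell `x` preserves the diagrams `ν` such that `κ / ν`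
is a horizontal and `ν / ρ` a vertical strip. -/
structure IsToggleCell (κ ρ : YoungDiagram) (x : ℕ × ℕ) : Prop where
  mem : x ∈ κ
  notMem : x ∉ ρ
  below_notMem : (x.1 + 1, x.2) ∉ κ
  left_mem : ∀ j < x.2, (x.1, j) ∈ ρ

-- The leftmost cell in the bottom row of `κ / ρ` does it.
lemma exists_isToggleCell (hne : ρ ≠ κ) (hle : ρ ≤ κ) : ∃ x, IsToggleCell κ ρ x := by
  obtain ⟨y, hy⟩ : (κ.cells \ ρ.cells).Nonempty :=
    sdiff_nonempty.2 fun h => hne (le_antisymm hle h)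
  obtain ⟨⟨p, q⟩, hpq, hmax⟩ := exists_max_image (κ.cells \ ρ.cells) Prod.fst ⟨y, hy⟩
  simp only [mem_sdiff, YoungDiagram.mem_cells, Prod.forall, and_imp] at hpq hmax
  have hq : ρ.rowLen p ≤ q := not_lt.1 fun h => hpq.2 (YoungDiagram.mem_iff_lt_rowLen.2 h)
  refine ⟨(p, ρ.rowLen p), κ.up_left_mem le_rfl hq hpq.1,
    fun h => (YoungDiagram.mem_iff_lt_rowLen.1 h).false, fun h => ?_,
    fun j hj => YoungDiagram.mem_iff_lt_rowLen.2 hj⟩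
  by_cases hρ : (p + 1, ρ.rowLen p) ∈ ρ
  · exact (YoungDiagram.mem_iff_lt_rowLen.1 (ρ.up_left_mem p.le_succ le_rfl hρ)).false
  · exact absurd (hmax _ _ h hρ) (by omega)

lemma mem_toggleCell (hx : IsToggleCell κ ρ x)
    (h : IsHorizontalStrip κ ν ∧ IsVerticalStrip ν ρ) {y : ℕ × ℕ} :
    y ∈ toggleCell x ν ↔ y ∈ ν ∧ y ≠ x ∨ y = x ∧ x ∉ ν := by
  obtain ⟨hκν, hνρ⟩ := h
  rw [isVerticalStrip_iff] at hνρ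
  rw [toggleCell, mem_diagramOfCells]
  · simp only [mem_symmDiff, mem_singleton, YoungDiagram.mem_cells]
    aesop
  obtain ⟨p, q⟩ := x
  rintro ⟨i, j⟩ ⟨i', j'⟩ ⟨hi, hj⟩ hc
  simp only [mem_coe, mem_symmDiff, YoungDiagram.mem_cells, mem_singleton, Prod.mk.injEq]
    at hc ⊢
  simp only at hi hj
  rcases hc with ⟨hmem, hne⟩ | ⟨⟨rfl, rfl⟩, hnot⟩
  · refine .inl ⟨ν.up_left_mem hi hj hmem, ?_⟩
    rintro ⟨rfl, rfl⟩
    rcases hi.lt_or_eq with hlt | rfl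
    · exact hx.below_notMem (hκν.le (ν.up_left_mem hlt hj hmem))
    · exact hx.notMem (hνρ.2 _ _ (ν.up_left_mem le_rfl (by omega) hmem))
  · by_cases heq : i' = i ∧ j' = j
    · exact .inr ⟨heq, by rwa [heq.1, heq.2]⟩
    refine .inl ⟨?_, heq⟩
    rcases hi.lt_or_eq with hlt | rfl
    · exact hκν.above_mem (κ.up_left_mem hlt hj hx.mem)
    · exact hνρ.1 (hx.left_mem _ (by dsimp only; omega))

lemma isStrip_toggleCell (hx : IsToggleCell κ ρ x)
    (h : IsHorizontalStrip κ ν ∧ IsVerticalStrip ν ρ) :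
    IsHorizontalStrip κ (toggleCell x ν) ∧ IsVerticalStrip (toggleCell x ν) ρ := by
  have hmem {y : ℕ × ℕ} := mem_toggleCell hx h (y := y)
  obtain ⟨hκν, hνρ⟩ := h
  rw [isVerticalStrip_iff] at hνρ ⊢
  refine ⟨⟨fun y hy => ?_, fun {i j} hc => ?_⟩, fun y hy => ?_, fun i j hc => ?_⟩
  · rcases hmem.1 hy with h | ⟨rfl, -⟩
    exacts [hκν.le h.1, hx.mem]
  · refine hmem.2 (.inl ⟨hκν.above_mem hc, ?_⟩)
    rintro rfl
    exact hx.below_notMem hc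
  · exact hmem.2 (.inl ⟨hνρ.1 hy, fun h => hx.notMem (h ▸ hy)⟩)
  · rcases hmem.1 hc with h | ⟨rfl, -⟩
    exacts [hνρ.2 _ _ h.1, hx.left_mem _ j.lt_succ_self]

lemma toggleCell_toggleCell (hx : IsToggleCell κ ρ x)
    (h : IsHorizontalStrip κ ν ∧ IsVerticalStrip ν ρ) :
    toggleCell x (toggleCell x ν) = ν := by
  refine SetLike.ext fun y => ?_
  rw [mem_toggleCell hx (isStrip_toggleCell hx h), mem_toggleCell hx h, mem_toggleCell hx h]
  by_cases hy : y = x <;> simp [hy]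

lemma toggleCell_ne (hx : IsToggleCell κ ρ x)
    (h : IsHorizontalStrip κ ν ∧ IsVerticalStrip ν ρ) : toggleCell x ν ≠ ν := by
  intro heq
  have := mem_toggleCell hx h (y := x)
  rw [heq] at this
  tauto

lemma neg_one_pow_card_toggleCell (hx : IsToggleCell κ ρ x)
    (h : IsHorizontalStrip κ ν ∧ IsVerticalStrip ν ρ) :
    (-1 : ℚ) ^ ν.card + (-1) ^ (toggleCell x ν).card = 0 := by
  by_cases hxν : x ∈ ν
  · have : (toggleCell x ν).cells = ν.cells.erase x := by
      ext y
      rw [YoungDiagram.mem_cells, mem_toggleCell hx h, mem_erase, YoungDiagram.mem_cells]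
      tauto
    rw [YoungDiagram.card, YoungDiagram.card, this,
      ← card_erase_add_one ((YoungDiagram.mem_cells _).2 hxν)]
    ring
  · have : (toggleCell x ν).cells = insert x ν.cells := by
      ext y
      rw [YoungDiagram.mem_cells, mem_toggleCell hx h, mem_insert, YoungDiagram.mem_cells]
      have : y = x → y ∉ ν := by rintro rfl; exact hxν
      tauto
    rw [YoungDiagram.card, YoungDiagram.card, this,
      card_insert_of_notMem (by rwa [YoungDiagram.mem_cells])]
    ring

lemma sum_neg_one_pow_card_between_strips (hne : ρ ≠ κ) {s : Finset YoungDiagram}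
    (hs : ∀ ν, ν ∈ s ↔ IsHorizontalStrip κ ν ∧ IsVerticalStrip ν ρ) :
    ∑ ν ∈ s, (-1 : ℚ) ^ ν.card = 0 := by
  rcases s.eq_empty_or_nonempty with rfl | ⟨ν₀, hν₀⟩
  · exact sum_empty
  obtain ⟨hκ, hρ⟩ := (hs ν₀).1 hν₀
  obtain ⟨x, hx⟩ := exists_isToggleCell hne ((isVerticalStrip_iff.1 hρ).1.trans hκ.le)
  exact sum_involution (fun ν _ => toggleCell x ν)
    (fun ν hν => neg_one_pow_card_toggleCell hx ((hs ν).1 hν))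
    (fun ν hν _ => toggleCell_ne hx ((hs ν).1 hν))
    (fun ν hν => (hs _).2 (isStrip_toggleCell hx ((hs ν).1 hν)))
    (fun ν hν => toggleCell_toggleCell hx ((hs ν).1 hν))

lemma sum_neg_one_pow_mul_card_between_strips {n : ℕ} (hn : n ≠ 0) (hκ : κ.card = ρ.card + n) :
    ∑ p ∈ antidiagonal n, (-1 : ℚ) ^ p.2 * #{ν ∈ diagramsOfCard (ρ.card + p.1) |
      IsHorizontalStrip κ ν ∧ IsVerticalStrip ν ρ} = 0 := by
  set s := {ν ∈ (range (κ.card + 1)).biUnion diagramsOfCard |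
    IsHorizontalStrip κ ν ∧ IsVerticalStrip ν ρ} with hs
  have hmem (ν : YoungDiagram) : ν ∈ s ↔ IsHorizontalStrip κ ν ∧ IsVerticalStrip ν ρ := by
    simp only [hs, mem_filter, mem_biUnion, mem_range, mem_diagramsOfCard, and_iff_right_iff_imp]
    exact fun h => ⟨_, Nat.lt_succ_of_le (card_le_card_of_le h.1.le), rfl⟩
  have hcard {ν : YoungDiagram} (hν : ν ∈ s) : ρ.card ≤ ν.card ∧ ν.card ≤ κ.card :=
    ⟨card_le_card_of_le (isVerticalStrip_iff.1 ((hmem ν).1 hν).2).1,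
      card_le_card_of_le ((hmem ν).1 hν).1.le⟩
  have hfib (p : ℕ × ℕ) (hp : p ∈ antidiagonal n) :
      (-1 : ℚ) ^ p.2 * #{ν ∈ diagramsOfCard (ρ.card + p.1) |
        IsHorizontalStrip κ ν ∧ IsVerticalStrip ν ρ} =
      ∑ ν ∈ s with (ν.card - ρ.card, κ.card - ν.card) = p, (-1) ^ κ.card * (-1) ^ ν.card := by
    rw [HasAntidiagonal.mem_antidiagonal] at hp
    have hset : {ν ∈ s | (ν.card - ρ.card, κ.card - ν.card) = p} =
        {ν ∈ diagramsOfCard (ρ.card + p.1) | IsHorizontalStrip κ ν ∧ IsVerticalStrip ν ρ} := by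
      ext ν
      simp only [mem_filter, hmem, mem_diagramsOfCard, Prod.ext_iff]
      refine ⟨fun h => ⟨?_, h.1⟩, fun h => ⟨h.2, ?_⟩⟩ <;>
      · have := hcard ((hmem ν).2 (by tauto))
        omega
    rw [hset, mul_comm, ← nsmul_eq_mul]
    refine (sum_eq_card_nsmul fun ν hν => ?_).symm
    rw [mem_filter, mem_diagramsOfCard] at hν
    rw [← pow_add, hκ, hν.1, ← hp]
    exact neg_one_pow_congr (by grind)
  rw [sum_congr rfl hfib, sum_fiberwise_of_maps_to fun ν hν => ?_, ← mul_sum,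
    sum_neg_one_pow_card_between_strips _ hmem, mul_zero]
  · rintro rfl
    omega
  · have := hcard hν
    rw [HasAntidiagonal.mem_antidiagonal]
    omega

-- The operator form of `(∑ (-1)^i h_i) (∑ e_j) = 1`.
lemma sum_neg_one_pow_smul_ePerp_hPerp {n : ℕ} (hn : n ≠ 0) (c : YoungDiagram → ℚ) :
    ∑ p ∈ antidiagonal n, (-1 : ℚ) ^ p.2 • ePerp p.1 (hPerp p.2 c) = 0 := by
  ext ρ
  have hsum (p : ℕ × ℕ) (hp : p ∈ antidiagonal n) :
      ((-1 : ℚ) ^ p.2 • ePerp p.1 (hPerp p.2 c)) ρ = ∑ κ ∈ diagramsOfCard (ρ.card + n),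
        (-1) ^ p.2 * #{ν ∈ diagramsOfCard (ρ.card + p.1) |
          IsHorizontalStrip κ ν ∧ IsVerticalStrip ν ρ} * c κ := by
    rw [Pi.smul_apply, stripPerp_stripPerp_apply, HasAntidiagonal.mem_antidiagonal.1 hp,
      smul_eq_mul, mul_sum]
    simp only [mul_assoc]
  rw [Finset.sum_apply, sum_congr rfl hsum, sum_comm]
  refine sum_eq_zero fun κ hκ => ?_
  rw [← sum_mul, sum_neg_one_pow_mul_card_between_strips hn (mem_diagramsOfCard.1 hκ), zero_mul]

lemma sum_ePerp_sum_hPerp (D : ℕ → YoungDiagram → ℚ) (k : ℕ) :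
    ∑ p ∈ antidiagonal k,
      ePerp p.1 (∑ q ∈ antidiagonal p.2, (-1 : ℚ) ^ q.1 • hPerp q.1 (D q.2)) = D k := by
  calc _ = ∑ p ∈ antidiagonal k,
        ∑ q ∈ antidiagonal p.1, (-1 : ℚ) ^ q.2 • ePerp q.1 (hPerp q.2 (D p.2)) := by
        simp only [map_sum, map_smul, sum_sigma']
        refine sum_nbij' (fun x => ⟨(x.1.1 + x.2.1, x.2.2), (x.1.1, x.2.1)⟩)
          (fun x => ⟨(x.2.1, x.2.2 + x.1.2), (x.2.2, x.1.2)⟩) ?_ ?_ ?_ ?_ ?_ <;>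
        simp only [mem_sigma, HasAntidiagonal.mem_antidiagonal] <;>
        rintro ⟨⟨i, j⟩, ⟨i', j'⟩⟩ ⟨h1, h2⟩ <;>
        dsimp only at h1 h2 ⊢ <;> subst h1 h2 <;> simp [add_assoc]
    _ = _ := by
        rw [sum_eq_single_of_mem (0, k) (by simp)]
        · simp [ePerp_zero, hPerp_zero]
        · rintro ⟨i, j⟩ hij hne
          refine sum_neg_one_pow_smul_ePerp_hPerp ?_ _
          rintro rfl
          simp_all

end Duality

/-! ### Schur expansions and monomial coefficients -/

section MonomialCoeff

variable {κ : YoungDiagram} {c : YoungDiagram → ℚ}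

-- The other diagrams occurring in `hPerp (κ.rowLen 0) c (tail κ)` have a longer first row than `κ`.
lemma eq_zero_of_hPerp_tail_eq_zero (h : ∀ κ' : YoungDiagram, κ'.card = κ.card →
      κ'.colLen 0 ≤ κ.colLen 0 → hPerp (κ'.rowLen 0) c (tail κ') = 0) : c κ = 0 := by
  induction hd : κ.card - κ.rowLen 0 using Nat.strong_induction_on generalizing κ with
  | _ d ih =>
  rw [← h κ rfl le_rfl, stripPerp_apply, add_comm, rowLen_zero_add_card_tail,
    sum_eq_single_of_mem κ (by simp [isHorizontalStrip_tail])]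
  intro κ' hκ' hne
  simp only [mem_filter, mem_diagramsOfCard] at hκ'
  obtain ⟨hcard, hstrip⟩ := hκ'
  have hlt : κ.rowLen 0 < κ'.rowLen 0 := by
    by_contra hle
    refine hne (eq_of_le_of_card_le (diagram_le_iff_rowLen_le.2 fun i => ?_) hcard.ge)
    cases i with
    | zero => omega
    | succ i => simpa using (isHorizontalStrip_iff_rowLen.1 hstrip i).2
  have hcol : κ'.colLen 0 ≤ κ.colLen 0 := by
    have := hstrip.colLen_zero_le
    rw [colLen_zero_tail] at this
    have hpos : κ.colLen 0 ≠ 0 := fun h0 => by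
      have := card_eq_zero_of_colLen_zero_eq_zero h0
      have := rowLen_zero_le_card κ'
      omega
    omega
  have := rowLen_zero_le_card κ'
  exact ih _ (by omega) (fun κ'' h1 h2 => h κ'' (h1.trans hcard) (h2.trans hcol)) rfl

/-- The coefficient of `x_1 ^ l_1 * x_2 ^ l_2 * ⋯` in the symmetric function with Schur
expansion `c`. -/
noncomputable def monomialCoeff (l : List ℕ) : (YoungDiagram → ℚ) →ₗ[ℚ] ℚ :=
  LinearMap.proj ⊥ ∘ₗ (l.map hPerp).prod

lemma monomialCoeff_apply (l : List ℕ) (c : YoungDiagram → ℚ) :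
    monomialCoeff l c = (l.map hPerp).prod c ⊥ := rfl

@[simp]
lemma monomialCoeff_nil (c : YoungDiagram → ℚ) : monomialCoeff [] c = c ⊥ := rfl

@[simp]
lemma monomialCoeff_concat (l : List ℕ) (a : ℕ) (c : YoungDiagram → ℚ) :
    monomialCoeff (l ++ [a]) c = monomialCoeff l (hPerp a c) := by
  simp [monomialCoeff_apply]

lemma eq_zero_of_forall_monomialCoeff_eq_zero (h : ∀ l, monomialCoeff l c = 0) : c = 0 := by
  ext κ
  induction hN : κ.card using Nat.strong_induction_on generalizing κ c with
  | _ N ih =>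
  rcases N.eq_zero_or_pos with rfl | hpos
  · rw [eq_bot_of_card_eq_zero hN]
    exact h []
  refine eq_zero_of_hPerp_tail_eq_zero fun κ' hcard _ => ?_
  have htail := rowLen_zero_add_card_tail κ'
  have hrow : κ'.rowLen 0 ≠ 0 := fun h0 => by
    have := card_eq_zero_of_rowLen_zero_eq_zero h0
    omega
  exact ih _ (by omega) (fun l => by rw [← monomialCoeff_concat, h]) _ rfl

lemma eq_of_forall_monomialCoeff_eq {d : YoungDiagram → ℚ}
    (h : ∀ l, monomialCoeff l c = monomialCoeff l d) : c = d :=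
  sub_eq_zero.1 (eq_zero_of_forall_monomialCoeff_eq_zero fun l => by rw [map_sub, h, sub_self])

/-- The conditions for `l ↦ F l` to list the coefficients of the monomials
`x_1 ^ l_1 * x_2 ^ l_2 * ⋯` in a symmetric function. -/
structure IsSymmetric (F : List ℕ → ℚ) : Prop where
  perm : ∀ {l l' : List ℕ}, l.Perm l' → F l = F l'
  zero_cons : ∀ l, F (0 :: l) = F l

lemma IsSymmetric.filter_ne_zero {F : List ℕ → ℚ} (hF : IsSymmetric F) (l : List ℕ) :
    F (l.filter (0 < ·)) = F l := by
  suffices h : ∀ pre, F (pre ++ l.filter (0 < ·)) = F (pre ++ l) from h []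
  induction l with
  | nil => simp
  | cons x l ih =>
    intro pre
    rcases x.eq_zero_or_pos with rfl | hx
    · simpa [hF.perm List.perm_middle, hF.zero_cons] using ih pre
    · simpa [hx] using ih (pre ++ [x])

lemma IsSymmetric.ext {F G : List ℕ → ℚ} (hF : IsSymmetric F) (hG : IsSymmetric G)
    (h : ∀ κ : YoungDiagram, F κ.rowLens = G κ.rowLens) : F = G := by
  ext l
  set w := (l.filter (0 < ·)).insertionSort (· ≥ ·) with hw
  have hsort : w.SortedGE := List.sortedGE_insertionSort
  have hpos : ∀ x ∈ w, 0 < x := by simp [hw]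
  have hperm : w.Perm (l.filter (0 < ·)) := List.perm_insertionSort _ _
  rw [← hF.filter_ne_zero, ← hG.filter_ne_zero, ← hF.perm hperm, ← hG.perm hperm,
    ← YoungDiagram.rowLens_ofRowLens_eq_self (hw := hsort) hpos, h]

lemma isSymmetric_monomialCoeff (c : YoungDiagram → ℚ) :
    IsSymmetric fun l => monomialCoeff l c where
  perm {l l'} h := by
    have hcomm : (l.map hPerp).Pairwise Commute :=
      (List.pairwise_map.2 (List.pairwise_of_forall fun a b => LinearMap.ext (hPerp_comm a b)))
    simp only [monomialCoeff_apply]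
    rw [(h.map hPerp).prod_eq' hcomm]
  zero_cons l := by
    rw [monomialCoeff_apply, List.map_cons, List.prod_cons, Module.End.mul_apply, hPerp_zero]
    rfl

lemma prod_hPerp_apply_eq_zero {N : ℕ} (hc : ∀ κ, κ.card ≠ N → c κ = 0) (l : List ℕ)
    {ν : YoungDiagram} (hν : ν.card + l.sum ≠ N) : (l.map hPerp).prod c ν = 0 := by
  induction l generalizing ν with
  | nil => exact hc ν (by simpa using hν)
  | cons a l ih =>
    rw [List.map_cons, List.prod_cons, Module.End.mul_apply, stripPerp_apply]
    refine sum_eq_zero fun κ hκ => ih ?_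
    rw [(mem_diagramsOfCard.1 (mem_filter.1 hκ).1)]
    rw [List.sum_cons] at hν
    omega

lemma monomialCoeff_eq_zero {N : ℕ} (hc : ∀ κ, κ.card ≠ N → c κ = 0) {l : List ℕ}
    (hl : l.sum ≠ N) : monomialCoeff l c = 0 :=
  prod_hPerp_apply_eq_zero hc l (by rwa [card_bot, zero_add])

lemma sum_rowLens (κ : YoungDiagram) : κ.rowLens.sum = κ.card := by
  rw [card_eq_sum_rowLen le_rfl, YoungDiagram.rowLens]
  rfl

-- The Schur coefficients solve a square linear system, whose kernel is trivial.
theorem exists_monomialCoeff_eq {F : List ℕ → ℚ} {N : ℕ} (hF : IsSymmetric F)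
    (hN : ∀ l, l.sum ≠ N → F l = 0) :
    ∃ c : YoungDiagram → ℚ, (∀ κ, κ.card ≠ N → c κ = 0) ∧ ∀ l, monomialCoeff l c = F l := by
  set ext := Function.ExtendByZero.linearMap ℚ (Subtype.val : diagramsOfCard N → YoungDiagram)
  have hext (c : diagramsOfCard N → ℚ) (κ : YoungDiagram) (hκ : κ.card ≠ N) : ext c κ = 0 :=
    Function.extend_apply' _ _ _ fun ⟨κ', h⟩ => hκ (h ▸ mem_diagramsOfCard.1 κ'.2)
  have hall {G : List ℕ → ℚ} (hG : IsSymmetric G) (hG0 : ∀ l, l.sum ≠ N → G l = 0)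
      {c : diagramsOfCard N → ℚ}
      (h : ∀ κ : diagramsOfCard N, monomialCoeff κ.1.rowLens (ext c) = G κ.1.rowLens) (l : List ℕ) :
      monomialCoeff l (ext c) = G l := by
    refine congrFun ((isSymmetric_monomialCoeff _).ext hG fun κ => ?_) l
    by_cases hκ : κ.card = N
    · exact h ⟨κ, mem_diagramsOfCard.2 hκ⟩
    · rw [hG0 _ (by rwa [sum_rowLens]), monomialCoeff_eq_zero (hext c) (by rwa [sum_rowLens])]
  let Φ : (diagramsOfCard N → ℚ) →ₗ[ℚ] (diagramsOfCard N → ℚ) :=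
    LinearMap.pi fun κ => monomialCoeff κ.1.rowLens ∘ₗ ext
  have hinj : Function.Injective Φ := by
    rw [injective_iff_map_eq_zero]
    intro c hc
    have h0 : ext c = 0 := eq_zero_of_forall_monomialCoeff_eq_zero
      (hall (G := 0) ⟨fun _ => rfl, fun _ => rfl⟩ (fun _ _ => rfl) (congrFun hc))
    ext κ
    rw [← Subtype.val_injective.extend_apply c 0 κ]
    exact congrFun h0 κ
  obtain ⟨c, hc⟩ := LinearMap.injective_iff_surjective.1 hinj fun κ => F κ.1.rowLens
  exact ⟨ext c, hext c, hall hF hN (congrFun hc)⟩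

end MonomialCoeff

/-! ### Chromatic symmetric functions of induced subgraphs -/

section Chromatic

variable {V V' : Type*} [DecidableEq V] [DecidableEq V'] {G : SimpleGraph V} {G' : SimpleGraph V'}
  {W K : Finset V}

/-- The stable subsets of `W` of size `a`. -/
noncomputable def stableSubsets (G : SimpleGraph V) (a : ℕ) (W : Finset V) : Finset (Finset V) :=
  {T ∈ powersetCard a W | G.IsIndepSet (T : Set V)}

lemma mem_stableSubsets {a : ℕ} {T : Finset V} :
    T ∈ stableSubsets G a W ↔ T ⊆ W ∧ #T = a ∧ G.IsIndepSet (T : Set V) := by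
  rw [stableSubsets, mem_filter, mem_powersetCard, and_assoc]

/-- The operator on functions of a vertex set `W` that sums over the removals of a stable set of
size `a`. -/
noncomputable def removeStable (G : SimpleGraph V) (a : ℕ) :
    (Finset V → ℚ) →ₗ[ℚ] (Finset V → ℚ) where
  toFun F W := ∑ T ∈ stableSubsets G a W, F (W \ T)
  map_add' F F' := by ext W; simp [sum_add_distrib]
  map_smul' r F := by ext W; simp [mul_sum]

lemma removeStable_apply (G : SimpleGraph V) (a : ℕ) (F : Finset V → ℚ) (W : Finset V) :
    removeStable G a F W = ∑ T ∈ stableSubsets G a W, F (W \ T) := rfl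

lemma removeStable_zero (G : SimpleGraph V) (F : Finset V → ℚ) : removeStable G 0 F = F := by
  ext W
  simp [removeStable_apply, stableSubsets, filter_singleton]

lemma removeStable_comm (G : SimpleGraph V) (a b : ℕ) (F : Finset V → ℚ) :
    removeStable G a (removeStable G b F) = removeStable G b (removeStable G a F) := by
  ext W
  simp only [removeStable_apply]
  refine (sum_comm' fun T U => ?_).trans
    (sum_congr rfl fun U _ => sum_congr rfl fun T _ => by rw [sdiff_right_comm])
  simp only [mem_stableSubsets, subset_sdiff, disjoint_comm (a := T)]
  tauto

/-- The number of proper colorings of `G[W]` with color classes of the sizes listed in `l`. -/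
noncomputable def coloringCount (G : SimpleGraph V) (l : List ℕ) (W : Finset V) : ℚ :=
  (l.map (removeStable G)).prod (fun W => if W = ∅ then 1 else 0) W

lemma coloringCount_nil (G : SimpleGraph V) (W : Finset V) :
    coloringCount G [] W = if W = ∅ then 1 else 0 := rfl

lemma coloringCount_cons (G : SimpleGraph V) (a : ℕ) (l : List ℕ) (W : Finset V) :
    coloringCount G (a :: l) W =
      ∑ T ∈ stableSubsets G a W, coloringCount G l (W \ T) := by
  rw [coloringCount, List.map_cons, List.prod_cons]
  rfl

lemma isSymmetric_coloringCount (G : SimpleGraph V) (W : Finset V) :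
    IsSymmetric fun l => coloringCount G l W where
  perm {l l'} h := by
    have hcomm : (l.map (removeStable G)).Pairwise Commute :=
      List.pairwise_map.2
        (List.pairwise_of_forall fun a b => LinearMap.ext (removeStable_comm G a b))
    simp only [coloringCount]
    rw [(h.map (removeStable G)).prod_eq' hcomm]
  zero_cons l := by
    rw [coloringCount, List.map_cons, List.prod_cons, Module.End.mul_apply, removeStable_zero]
    rfl

lemma coloringCount_eq_zero {l : List ℕ} (h : l.sum ≠ #W) : coloringCount G l W = 0 := by
  induction l generalizing W with
  | nil =>
    rw [coloringCount_nil, if_neg]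
    rintro rfl
    simp at h
  | cons a l ih =>
    rw [coloringCount_cons]
    refine sum_eq_zero fun T hT => ih ?_
    rw [mem_stableSubsets] at hT
    have := card_sdiff_add_card_eq_card hT.1
    rw [List.sum_cons] at h
    omega

lemma stableSubsets_map (φ : G' ↪g G) (a : ℕ) (W : Finset V') :
    stableSubsets G a (W.map φ.toEmbedding) =
      (stableSubsets G' a W).map (mapEmbedding φ.toEmbedding).toEmbedding := by
  rw [stableSubsets, powersetCard_map, filter_map, stableSubsets]
  congr 1
  refine filter_congr fun T _ => ?_
  simp [SimpleGraph.IsIndepSet, Set.Pairwise]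

lemma coloringCount_map (φ : G' ↪g G) (l : List ℕ) (W : Finset V') :
    coloringCount G l (W.map φ.toEmbedding) = coloringCount G' l W := by
  induction l generalizing W with
  | nil => simp [coloringCount_nil]
  | cons a l ih =>
    rw [coloringCount_cons, coloringCount_cons, stableSubsets_map, sum_map]
    refine sum_congr rfl fun T _ => ?_
    rw [← ih, Finset.map_sdiff]
    rfl

lemma exists_chromaticSchur (G : SimpleGraph V) (W : Finset V) :
    ∃ c : YoungDiagram → ℚ, (∀ κ, κ.card ≠ #W → c κ = 0) ∧
      ∀ l, monomialCoeff l c = coloringCount G l W :=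
  exists_monomialCoeff_eq (isSymmetric_coloringCount G W) fun _ => coloringCount_eq_zero

/-- The Schur coefficients of the chromatic symmetric function of `G[W]`. -/
noncomputable def chromaticSchur (G : SimpleGraph V) (W : Finset V) : YoungDiagram → ℚ :=
  (exists_chromaticSchur G W).choose

lemma chromaticSchur_eq_zero_of_card_ne {κ : YoungDiagram} (h : κ.card ≠ #W) :
    chromaticSchur G W κ = 0 :=
  (exists_chromaticSchur G W).choose_spec.1 κ h

lemma monomialCoeff_chromaticSchur (G : SimpleGraph V) (W : Finset V) (l : List ℕ) :
    monomialCoeff l (chromaticSchur G W) = coloringCount G l W :=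
  (exists_chromaticSchur G W).choose_spec.2 l

lemma chromaticSchur_map (φ : G' ↪g G) (W : Finset V') :
    chromaticSchur G (W.map φ.toEmbedding) = chromaticSchur G' W :=
  eq_of_forall_monomialCoeff_eq fun l => by
    simp only [monomialCoeff_chromaticSchur, coloringCount_map]

lemma hPerp_chromaticSchur (G : SimpleGraph V) (a : ℕ) (W : Finset V) :
    hPerp a (chromaticSchur G W) =
      ∑ T ∈ stableSubsets G a W, chromaticSchur G (W \ T) :=
  eq_of_forall_monomialCoeff_eq fun l => by
    rw [← monomialCoeff_concat, monomialCoeff_chromaticSchur, map_sum,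
      (isSymmetric_coloringCount G W).perm (List.perm_append_singleton a l), coloringCount_cons]
    simp only [monomialCoeff_chromaticSchur]

-- Removing a stable set shrinks the clique by at most one vertex, and the diagram by one row.
theorem chromaticSchur_eq_zero_of_colLen_lt {ν : YoungDiagram} (hK : G.IsClique K) (hKW : K ⊆ W)
    (hν : ν.colLen 0 < #K) : chromaticSchur G W ν = 0 := by
  induction hW : #W using Nat.strong_induction_on generalizing W K ν with
  | _ N ih =>
  subst hW
  by_cases hcard : ν.card = #W
  swap
  · exact chromaticSchur_eq_zero_of_card_ne hcard
  have hWpos : 0 < #W := (Nat.zero_lt_of_lt hν).trans_le (card_le_card hKW)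
  refine eq_zero_of_hPerp_tail_eq_zero fun κ hκ hcol => ?_
  have hrow : κ.rowLen 0 ≠ 0 := fun h0 => by
    have := card_eq_zero_of_rowLen_zero_eq_zero h0
    omega
  have hcol0 : κ.colLen 0 ≠ 0 := fun h0 => by
    have := card_eq_zero_of_colLen_zero_eq_zero h0
    omega
  rw [hPerp_chromaticSchur, Finset.sum_apply]
  refine sum_eq_zero fun T hT => ?_
  rw [mem_stableSubsets] at hT
  obtain ⟨hTW, hTcard, hT⟩ := hT
  have hKT : #K ≤ #(K \ T) + 1 := by
    have : #(K ∩ T) ≤ 1 := card_le_one.2 fun u hu v hv => by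
      rw [mem_inter] at hu hv
      by_contra huv
      exact hT hu.2 hv.2 huv (hK hu.1 hv.1 huv)
    have := card_sdiff_add_card_inter K T
    omega
  have := card_sdiff_add_card_eq_card hTW
  refine ih _ (by omega) (hK.subset (by simp)) (sdiff_subset_sdiff hKW le_rfl) ?_ rfl
  rw [colLen_zero_tail]
  omega

end Chromatic

/-! ### Trailing parts equal to one -/

section AddOne

variable {κ ν : YoungDiagram}

/-- The diagram obtained by adding a cell to the first row. -/
def addBox (κ : YoungDiagram) : YoungDiagram where
  cells := insert (0, κ.rowLen 0) κ.cells
  isLowerSet := by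
    rintro ⟨i, j⟩ ⟨i', j'⟩ ⟨hi, hj⟩ hc
    simp only [coe_insert, Set.mem_insert_iff, Prod.mk.injEq, mem_coe, YoungDiagram.mem_cells]
      at hc hi hj ⊢
    rcases hc with ⟨rfl, rfl⟩ | hc
    · rcases hj.lt_or_eq with hj | rfl
      · exact .inr (YoungDiagram.mem_iff_lt_rowLen.2 (by rwa [Nat.le_zero.1 hi]))
      · exact .inl ⟨Nat.le_zero.1 hi, rfl⟩
    · exact .inr (κ.up_left_mem hi hj hc)

lemma mem_addBox {x : ℕ × ℕ} : x ∈ addBox κ ↔ x = (0, κ.rowLen 0) ∨ x ∈ κ := by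
  rw [← YoungDiagram.mem_cells, addBox, mem_insert, YoungDiagram.mem_cells]

lemma card_addBox (κ : YoungDiagram) : (addBox κ).card = κ.card + 1 :=
  card_insert_of_notMem fun h =>
    (YoungDiagram.mem_iff_lt_rowLen.1 ((YoungDiagram.mem_cells _).1 h)).false

lemma rowLen_zero_addBox (κ : YoungDiagram) : (addBox κ).rowLen 0 = κ.rowLen 0 + 1 :=
  rowLen_eq_of_forall_mem_iff fun j => by
    rw [mem_addBox, YoungDiagram.mem_iff_lt_rowLen, Prod.mk.injEq]
    omega

lemma rowLen_succ_addBox (κ : YoungDiagram) (i : ℕ) :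
    (addBox κ).rowLen (i + 1) = κ.rowLen (i + 1) :=
  rowLen_eq_of_forall_mem_iff fun j => by
    rw [mem_addBox, YoungDiagram.mem_iff_lt_rowLen, Prod.mk.injEq]
    omega

lemma addBox_injective : Function.Injective addBox := fun κ ν h =>
  diagram_ext_rowLen fun i => by
    have := congrArg (YoungDiagram.rowLen · i) h
    cases i <;> simpa [rowLen_zero_addBox, rowLen_succ_addBox] using this

lemma exists_addBox_eq (h : κ.rowLen 1 < κ.rowLen 0) : ∃ ν, addBox ν = κ := by
  set f : ℕ → ℕ := fun i => if i = 0 then κ.rowLen 0 - 1 else κ.rowLen i with hf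
  have hanti : Antitone f := antitone_nat_of_succ_le fun i => by
    cases i with
    | zero => simp [hf]; omega
    | succ i => simpa [hf] using κ.rowLen_anti _ _ (Nat.le_succ _)
  have hle (i : ℕ) : f i ≤ κ.rowLen i := by
    cases i <;> simp [hf]
  refine ⟨subdiagramOfRowLen κ f, diagram_ext_rowLen fun i => ?_⟩
  cases i with
  | zero => rw [rowLen_zero_addBox, rowLen_subdiagramOfRowLen hanti hle]; simp [hf]; omega
  | succ i => rw [rowLen_succ_addBox, rowLen_subdiagramOfRowLen hanti hle]; simp [hf]

lemma IsHorizontalStrip.card_le (h : IsHorizontalStrip κ ν) : κ.card ≤ ν.card + κ.rowLen 0 := by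
  have : tail κ ≤ ν := diagram_le_iff_rowLen_le.2 fun i => by
    simpa using (isHorizontalStrip_iff_rowLen.1 h i).2
  have := card_le_card_of_le this
  have := rowLen_zero_add_card_tail κ
  omega

lemma IsHorizontalStrip.tail (h : IsHorizontalStrip κ ν) : IsHorizontalStrip (tail κ) (tail ν) :=
  isHorizontalStrip_iff_rowLen.2 fun i => by
    simpa using isHorizontalStrip_iff_rowLen.1 h (i + 1)

lemma isHorizontalStrip_addBox_iff :
    IsHorizontalStrip (addBox κ) ν ∧ ν.rowLen 0 < (addBox κ).rowLen 0 ↔ IsHorizontalStrip κ ν := by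
  simp only [isHorizontalStrip_iff_rowLen, rowLen_zero_addBox, rowLen_succ_addBox]
  constructor
  · rintro ⟨h, h0⟩ (_ | i)
    · exact ⟨by omega, (h 0).2⟩
    · exact ⟨by simpa [rowLen_succ_addBox] using (h (i + 1)).1, (h (i + 1)).2⟩
  · refine fun h => ⟨?_, Nat.lt_succ_of_le (h 0).1⟩
    rintro (_ | i)
    · exact ⟨(h 0).1.trans (by rw [rowLen_zero_addBox]; omega), (h 0).2⟩
    · rw [rowLen_succ_addBox]
      exact h (i + 1)

lemma hPerp_succ_apply_eq {a : ℕ} {c : YoungDiagram → ℚ}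
    (h : ∀ κ, IsHorizontalStrip κ ν → κ.card = ν.card + (a + 1) → c κ ≠ 0 →
      ν.rowLen 0 < κ.rowLen 0) :
    hPerp (a + 1) c ν = hPerp a (c ∘ addBox) ν := by
  symm
  refine sum_of_injOn addBox addBox_injective.injOn ?_ ?_ fun _ _ => rfl
  · intro κ hκ
    simp only [coe_filter, mem_diagramsOfCard, Set.mem_ofPred_eq] at hκ ⊢
    exact ⟨by rw [card_addBox, hκ.1, add_assoc], (isHorizontalStrip_addBox_iff.2 hκ.2).1⟩
  · intro κ hκ hnot
    simp only [mem_filter, mem_diagramsOfCard] at hκ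
    by_contra hc
    have hlt := h κ hκ.2 hκ.1 hc
    obtain ⟨κ, rfl⟩ := exists_addBox_eq
      ((isHorizontalStrip_iff_rowLen.1 hκ.2 0).2.trans_lt hlt)
    refine hnot ⟨κ, ?_, rfl⟩
    have := card_addBox κ
    simp only [coe_filter, mem_diagramsOfCard, Set.mem_ofPred_eq]
    exact ⟨by omega, isHorizontalStrip_addBox_iff.1 ⟨hκ.2, hlt⟩⟩

lemma hPerp_succ_apply_of_rowLen_le {a : ℕ} (hν : ν.rowLen 0 ≤ a) (c : YoungDiagram → ℚ) :
    hPerp (a + 1) c ν = hPerp a (c ∘ addBox) ν :=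
  hPerp_succ_apply_eq fun κ hκ hcard _ => by
    have := hκ.card_le
    omega

lemma hPerp_extend_addBox_apply {a : ℕ} (hν : ν.rowLen 0 ≤ a + 1) (c : YoungDiagram → ℚ) :
    hPerp (a + 1) (Function.extend addBox c 0) ν = hPerp a c ν := by
  rw [hPerp_succ_apply_eq, Function.extend_comp addBox_injective]
  intro κ hκ hcard hc
  obtain ⟨κ, rfl⟩ : ∃ κ', addBox κ' = κ := by
    by_contra hex
    exact hc (Function.extend_apply' _ _ _ hex)
  have h1 := rowLen_zero_add_card_tail (addBox κ)
  have h2 := rowLen_zero_add_card_tail ν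
  have h3 := hκ.tail.card_le
  have h4 := κ.rowLen_anti 0 1 zero_le_one
  rw [rowLen_tail, rowLen_succ_addBox, zero_add] at h3
  rw [rowLen_zero_addBox] at h1 ⊢
  omega

/-- The diagram of the partition obtained by adding a part equal to one. -/
def addOne (κ : YoungDiagram) : YoungDiagram := (addBox κ.transpose).transpose

lemma mem_addOne {x : ℕ × ℕ} : x ∈ addOne κ ↔ x = (κ.colLen 0, 0) ∨ x ∈ κ := by
  rw [addOne, YoungDiagram.mem_transpose, mem_addBox, YoungDiagram.mem_transpose,
    Prod.swap_swap, YoungDiagram.rowLen_transpose, Prod.swap_eq_iff_eq_swap, Prod.swap_prod_mk]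

lemma addOne_injective : Function.Injective addOne := fun κ ν h => by
  simpa [addOne, addBox_injective.eq_iff] using h

lemma extend_addOne_apply_eq_zero (hν : ν.colLen 0 = 0) (c : YoungDiagram → ℚ) :
    Function.extend addOne c 0 ν = 0 :=
  Function.extend_apply' _ _ _ fun ⟨κ, hκ⟩ => by
    have := YoungDiagram.mem_iff_lt_colLen.1 (mem_addOne.2 (.inl rfl) : _ ∈ addOne κ)
    rw [hκ] at this
    omega

lemma extend_addOne_transpose (c : YoungDiagram → ℚ) (κ : YoungDiagram) :
    Function.extend addOne c 0 κ.transpose =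
      Function.extend addBox (fun ν => c ν.transpose) 0 κ := by
  by_cases h : ∃ ν, addBox ν = κ
  · obtain ⟨ν, rfl⟩ := h
    rw [addBox_injective.extend_apply, ← addOne_injective.extend_apply c 0 ν.transpose, addOne,
      YoungDiagram.transpose_transpose]
  · rw [Function.extend_apply' _ _ _ h, Function.extend_apply']
    · rfl
    rintro ⟨ν, hν⟩
    exact h ⟨ν.transpose, by rw [← YoungDiagram.transpose_transpose (addBox _), ← addOne, hν,
      YoungDiagram.transpose_transpose]⟩

lemma ePerp_succ_apply_of_colLen_le {a : ℕ} (hν : ν.colLen 0 ≤ a) (c : YoungDiagram → ℚ) :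
    ePerp (a + 1) c ν = ePerp a (c ∘ addOne) ν := by
  rw [ePerp_apply_eq_hPerp_transpose, ePerp_apply_eq_hPerp_transpose,
    hPerp_succ_apply_of_rowLen_le (by simpa using hν)]
  simp [Function.comp_def, addOne]

lemma ePerp_extend_addOne_apply {a : ℕ} (hν : ν.colLen 0 ≤ a + 1) (c : YoungDiagram → ℚ) :
    ePerp (a + 1) (Function.extend addOne c 0) ν = ePerp a c ν := by
  rw [ePerp_apply_eq_hPerp_transpose, ePerp_apply_eq_hPerp_transpose]
  simp only [extend_addOne_transpose]
  exact hPerp_extend_addBox_apply (by simpa using hν) _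

lemma eq_zero_of_ePerp_apply_eq_zero {c : YoungDiagram → ℚ}
    (h : ∀ a ν, ν.colLen 0 ≤ a → ePerp a c ν = 0) : c = 0 := by
  ext κ
  rw [← κ.transpose_transpose]
  refine eq_zero_of_hPerp_tail_eq_zero (κ := κ.transpose) (c := fun ν => c ν.transpose)
    fun κ' _ _ => ?_
  have := h (κ'.rowLen 0) (tail κ').transpose (by simpa using κ'.rowLen_anti 0 1 zero_le_one)
  rwa [ePerp_apply_eq_hPerp_transpose, YoungDiagram.transpose_transpose] at this

end AddOne

/-! ### Nets -/

section Net

variable {V : Type*} [DecidableEq V] {G : SimpleGraph V} {K P S W : Finset V}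

/-- The signed count of the decompositions of `S` into a subset of `P` and a stable set, the sign
recording the size of the latter. -/
noncomputable def signedWeight (G : SimpleGraph V) (P S : Finset V) : ℚ :=
  ∑ J ∈ (S ∩ P).powerset with G.IsIndepSet (S \ J : Finset V), (-1) ^ #(S \ J)

lemma sum_hPerp_sum_chromaticSchur (hP : P ⊆ W) (r : ℕ) :
    ∑ q ∈ antidiagonal r,
        (-1 : ℚ) ^ q.1 • hPerp q.1 (∑ J ∈ powersetCard q.2 P, chromaticSchur G (W \ J)) =
      ∑ S ∈ powersetCard r W, signedWeight G P S • chromaticSchur G (W \ S) := by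
  simp only [map_sum, hPerp_chromaticSchur, signedWeight, sum_smul, smul_sum, sum_sigma']
  refine sum_nbij' (fun x => ⟨x.2.1 ∪ x.2.2, x.2.1⟩)
    (fun y => ⟨(#(y.1 \ y.2), #y.2), y.2, y.1 \ y.2⟩) ?_ ?_ ?_ ?_ ?_
  · rintro ⟨⟨i, j⟩, J, T⟩ h
    simp only [mem_sigma, mem_powersetCard, HasAntidiagonal.mem_antidiagonal, mem_stableSubsets,
      subset_sdiff, mem_filter, mem_powerset] at h ⊢
    obtain ⟨hij, ⟨hJP, hJ⟩, ⟨hTW, hTJ⟩, hT, hstab⟩ := h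
    rw [union_sdiff_cancel_left hTJ.symm, card_union_of_disjoint hTJ.symm, hJ, hT]
    exact ⟨⟨union_subset (hJP.trans hP) hTW, by omega⟩, subset_inter subset_union_left hJP, hstab⟩
  · rintro ⟨S, J⟩ h
    simp only [mem_sigma, mem_powersetCard, HasAntidiagonal.mem_antidiagonal, mem_stableSubsets,
      mem_filter, mem_powerset, subset_inter_iff] at h ⊢
    obtain ⟨⟨hSW, hS⟩, ⟨hJS, hJP⟩, hstab⟩ := h
    exact ⟨(card_sdiff_add_card_eq_card hJS).trans hS, ⟨hJP, trivial⟩,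
      sdiff_subset_sdiff hSW le_rfl, trivial, hstab⟩
  · rintro ⟨⟨i, j⟩, J, T⟩ h
    simp only [mem_sigma, mem_powersetCard, mem_stableSubsets, subset_sdiff] at h
    obtain ⟨-, ⟨-, rfl⟩, ⟨-, hTJ⟩, rfl, -⟩ := h
    simp only [union_sdiff_cancel_left hTJ.symm]
  · rintro ⟨S, J⟩ h
    simp only [mem_sigma, mem_filter, mem_powerset, subset_inter_iff] at h
    simp only [union_sdiff_of_subset h.2.1.1]
  · rintro ⟨⟨i, j⟩, J, T⟩ h
    simp only [mem_sigma, mem_stableSubsets, subset_sdiff] at h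
    obtain ⟨-, -, ⟨-, hTJ⟩, rfl, -⟩ := h
    simp only [union_sdiff_cancel_left hTJ.symm, sdiff_sdiff_left, sup_eq_union]

lemma isIndepSet_insert_iff_of_not_adj {p : V} (hp : ∀ v ∈ S, ¬G.Adj p v) :
    G.IsIndepSet (insert p S : Finset V) ↔ G.IsIndepSet (S : Set V) := by
  rw [coe_insert, SimpleGraph.IsIndepSet, Set.pairwise_insert]
  exact and_iff_left fun v hv _ => ⟨hp v hv, fun h => hp v hv h.symm⟩

-- Moving `p` from one part of the decomposition to the other reverses the sign.
lemma signedWeight_eq_zero_of_not_adj {p : V} (hpS : p ∈ S) (hpP : p ∈ P)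
    (hp : ∀ v ∈ S, ¬G.Adj p v) : signedWeight G P S = 0 := by
  have hmem : p ∈ S ∩ P := mem_inter.2 ⟨hpS, hpP⟩
  rw [signedWeight, sum_filter, ← insert_erase hmem, sum_powerset_insert (notMem_erase _ _),
    ← sum_add_distrib]
  refine sum_eq_zero fun J hJ => ?_
  have : p ∉ J := fun h => notMem_erase p _ (mem_powerset.1 hJ h)
  have hins : S \ J = insert p (S \ insert p J) := by grind
  have hnot : p ∉ S \ insert p J := by simp
  have hadj : ∀ v ∈ S \ insert p J, ¬G.Adj p v := fun v hv => hp v (mem_sdiff.1 hv).1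
  simp only [hins, isIndepSet_insert_iff_of_not_adj hadj, card_insert_of_notMem hnot, pow_succ]
  split_ifs <;> ring

lemma signedWeight_eq_zero_of_adj {u v : V} (hu : u ∈ S \ P) (hv : v ∈ S \ P) (huv : G.Adj u v) :
    signedWeight G P S = 0 := by
  rw [mem_sdiff] at hu hv
  rw [signedWeight, filter_false_of_mem, sum_empty]
  intro J hJ hstab
  have hJP := (mem_powerset.1 hJ).trans inter_subset_right
  exact hstab (mem_sdiff.2 ⟨hu.1, fun h => hu.2 (hJP h)⟩)
    (mem_sdiff.2 ⟨hv.1, fun h => hv.2 (hJP h)⟩) huv.ne huv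

lemma signedWeight_empty (G : SimpleGraph V) (P : Finset V) : signedWeight G P ∅ = 1 := by
  simp [signedWeight, SimpleGraph.IsIndepSet]

lemma signedWeight_singleton {u : V} (hu : u ∉ P) : signedWeight G P {u} = -1 := by
  simp [signedWeight, singleton_inter_of_notMem hu, sum_filter]

lemma signedWeight_pair {u p : V} (hu : u ∉ P) (hp : p ∈ P) (h : G.Adj p u) :
    signedWeight G P {p, u} = -1 := by
  have hpow : ({p} : Finset V).powerset = {∅, {p}} := rfl
  have hsdiff : ({p, u} : Finset V) \ {p} = {u} := by grind [h.ne]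
  rw [signedWeight, insert_inter_of_mem hp, singleton_inter_of_notMem hu, insert_empty_eq,
    sum_filter, hpow, sum_pair (singleton_ne_empty p).symm, hsdiff]
  simp [SimpleGraph.IsIndepSet, Set.pairwise_insert, h, h.ne]

/-- `G` is a net: the vertices outside the clique `K` are pendants, attached by `anchor` to
distinct vertices of `K`. -/
structure IsNet (G : SimpleGraph V) (K : Finset V) (anchor : V → V) : Prop where
  isClique : G.IsClique K
  anchor_mem : ∀ p ∉ K, anchor p ∈ K
  adj_iff : ∀ p ∉ K, ∀ u, G.Adj p u ↔ u = anchor p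
  injOn_anchor : Set.InjOn anchor (K : Set V)ᶜ

namespace IsNet

variable {anchor : V → V}

lemma card_pair_anchor (h : IsNet G K anchor) {p : V} (hp : p ∉ K) : #{p, anchor p} = 2 :=
  card_pair fun heq => hp (heq ▸ h.anchor_mem p hp)

variable [Fintype V]

lemma eq_of_signedWeight_ne_zero (h : IsNet G K anchor) (hS : signedWeight G Kᶜ S ≠ 0) :
    S = ∅ ∨ (∃ u ∈ K, S = {u}) ∨ ∃ p ∉ K, S = {p, anchor p} := by
  have hanchor (p : V) (hpS : p ∈ S) (hpK : p ∉ K) : anchor p ∈ S := by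
    by_contra hp
    refine hS (signedWeight_eq_zero_of_not_adj hpS (mem_compl.2 hpK) fun v hv hadj => hp ?_)
    rwa [← (h.adj_iff p hpK v).1 hadj]
  have hbody {u v : V} (hu : u ∈ S) (hv : v ∈ S) (huK : u ∈ K) (hvK : v ∈ K) : u = v := by
    by_contra huv
    exact hS (signedWeight_eq_zero_of_adj (by simp [hu, huK]) (by simp [hv, hvK])
      (h.isClique huK hvK huv))
  by_cases hSK : S ⊆ K
  · rcases S.eq_empty_or_nonempty with rfl | ⟨u, hu⟩
    · exact .inl rfl
    · exact .inr (.inl ⟨u, hSK hu, eq_singleton_iff_unique_mem.2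
        ⟨hu, fun v hv => hbody hv hu (hSK hv) (hSK hu)⟩⟩)
  · obtain ⟨p, hpS, hpK⟩ := not_subset.1 hSK
    have hap := hanchor p hpS hpK
    refine .inr (.inr ⟨p, hpK, Subset.antisymm (fun v hv => ?_) (by grind)⟩)
    rw [mem_insert, mem_singleton]
    by_cases hvK : v ∈ K
    · exact .inr (hbody hv hap hvK (h.anchor_mem p hpK))
    · exact .inl (h.injOn_anchor hvK hpK (hbody (hanchor v hv hvK) hap (h.anchor_mem v hvK)
        (h.anchor_mem p hpK)))

lemma sum_signedWeight_one (h : IsNet G K anchor) (F : Finset V → YoungDiagram → ℚ) :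
    ∑ S ∈ powersetCard 1 univ, signedWeight G Kᶜ S • F S = -∑ u ∈ K, F {u} := by
  rw [← sum_neg_distrib]
  symm
  refine sum_of_injOn singleton singleton_injective.injOn (fun u _ => ?_) (fun S hS hnot => ?_)
    fun u hu => ?_
  · simp
  · by_contra h0
    rw [mem_powersetCard_univ] at hS
    rcases h.eq_of_signedWeight_ne_zero (left_ne_zero_of_smul h0) with
      rfl | ⟨u, hu, rfl⟩ | ⟨p, hp, rfl⟩
    · simp at hS
    · exact hnot (Set.mem_image_of_mem _ hu)
    · simp [h.card_pair_anchor hp] at hS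
  · rw [signedWeight_singleton (by simpa using hu), neg_one_smul]

lemma sum_signedWeight_two (h : IsNet G K anchor) (F : Finset V → YoungDiagram → ℚ) :
    ∑ S ∈ powersetCard 2 univ, signedWeight G Kᶜ S • F S = -∑ p ∈ Kᶜ, F {p, anchor p} := by
  rw [← sum_neg_distrib]
  symm
  refine sum_of_injOn (fun p => {p, anchor p}) (fun p hp q hq hpq => ?_) (fun p hp => ?_)
    (fun S hS hnot => ?_) fun p hp => ?_
  · rw [mem_coe, mem_compl] at hp hq
    have hmem : p ∈ ({q, anchor q} : Finset V) := hpq.subset (mem_insert_self p _)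
    rw [mem_insert, mem_singleton] at hmem
    exact hmem.resolve_right fun heq => hp (heq ▸ h.anchor_mem q hq)
  · simpa using h.card_pair_anchor (by simpa using hp)
  · by_contra h0
    rw [mem_powersetCard_univ] at hS
    rcases h.eq_of_signedWeight_ne_zero (left_ne_zero_of_smul h0) with
      rfl | ⟨u, -, rfl⟩ | ⟨p, hp, rfl⟩
    · simp at hS
    · simp at hS
    · exact hnot (Set.mem_image_of_mem _ (by simpa using hp))
  · rw [mem_compl] at hp
    rw [signedWeight_pair (by simpa using h.anchor_mem p hp) (mem_compl.2 hp)
      ((h.adj_iff p hp _).2 rfl), neg_one_smul]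

lemma sum_signedWeight_of_three_le (h : IsNet G K anchor) (F : Finset V → YoungDiagram → ℚ) {r : ℕ}
    (hr : 3 ≤ r) : ∑ S ∈ powersetCard r univ, signedWeight G Kᶜ S • F S = 0 := by
  refine sum_eq_zero fun S hS => ?_
  by_contra h0
  rw [mem_powersetCard_univ] at hS
  rcases h.eq_of_signedWeight_ne_zero (left_ne_zero_of_smul h0) with
    rfl | ⟨u, -, rfl⟩ | ⟨p, hp, rfl⟩
  · simp at hS
    omega
  · simp at hS
    omega
  · have := h.card_pair_anchor hp
    omega

lemma card_compl_le (h : IsNet G K anchor) : #Kᶜ ≤ #K :=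
  card_le_card_of_injOn anchor (fun p hp => h.anchor_mem p (by simpa using hp))
    (by simpa using h.injOn_anchor)

lemma sum_chromaticSchur_apply_eq_zero (h : IsNet G K anchor) {k : ℕ} {ν : YoungDiagram}
    (hν : ν.colLen 0 < k) :
    (∑ J ∈ powersetCard k Kᶜ, chromaticSchur G (univ \ J)) ν = 0 := by
  rw [Finset.sum_apply]
  refine sum_eq_zero fun J hJ => ?_
  obtain ⟨hJK, hJ⟩ := mem_powersetCard.1 hJ
  have := card_le_card hJK
  have := h.card_compl_le
  refine chromaticSchur_eq_zero_of_colLen_lt h.isClique (fun u hu => ?_) (by omega)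
  exact mem_sdiff.2 ⟨mem_univ u, fun huJ => mem_compl.1 (hJK huJ) hu⟩

lemma sum_ePerp_sum_signedWeight_apply (h : IsNet G K anchor) {k : ℕ} {ν : YoungDiagram}
    (hν : ν.colLen 0 < k) :
    ∑ p ∈ antidiagonal k, ePerp p.1
      (∑ S ∈ powersetCard p.2 univ, signedWeight G Kᶜ S • chromaticSchur G Sᶜ) ν = 0 := by
  rw [← h.sum_chromaticSchur_apply_eq_zero hν, ← sum_ePerp_sum_hPerp
    (fun j => ∑ J ∈ powersetCard j Kᶜ, chromaticSchur G (univ \ J)) k, Finset.sum_apply]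
  simp only [sum_hPerp_sum_chromaticSchur (subset_univ _), compl_eq_univ_sdiff]

theorem chromaticSchur_addOne (h : IsNet G K anchor) (κ : YoungDiagram) :
    chromaticSchur G univ (addOne κ) = ∑ u ∈ K, chromaticSchur G {u}ᶜ κ +
      ∑ p ∈ Kᶜ, Function.extend addOne (chromaticSchur G {p, anchor p}ᶜ) 0 κ := by
  set C₁ := ∑ u ∈ K, chromaticSchur G {u}ᶜ with hC₁
  set C₂ := ∑ p ∈ Kᶜ, chromaticSchur G {p, anchor p}ᶜ
  have hext : Function.extend addOne C₂ 0 =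
    ∑ p ∈ Kᶜ, Function.extend addOne (chromaticSchur G {p, anchor p}ᶜ) 0 :=
    map_sum (Function.ExtendByZero.linearMap ℚ addOne) _ _
  suffices hzero : chromaticSchur G univ ∘ addOne - C₁ - Function.extend addOne C₂ 0 = 0 by
    rw [sub_sub, sub_eq_zero, hext] at hzero
    simpa [hC₁] using congrFun hzero κ
  set R : ℕ → YoungDiagram → ℚ :=
    fun r => ∑ S ∈ powersetCard r univ, signedWeight G Kᶜ S • chromaticSchur G Sᶜ with hR
  have hR₀ : R 0 = chromaticSchur G univ := by simp [hR, signedWeight_empty]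
  have hR₁ : R 1 = -C₁ := h.sum_signedWeight_one fun S => chromaticSchur G Sᶜ
  have hR₂ : R 2 = -C₂ := h.sum_signedWeight_two fun S => chromaticSchur G Sᶜ
  have hR₃ (r : ℕ) : R (r + 1 + 1 + 1) = 0 := h.sum_signedWeight_of_three_le _ (by omega)
  refine eq_zero_of_ePerp_apply_eq_zero fun a ν hν => ?_
  have key : ∑ p ∈ antidiagonal (a + 1), ePerp p.1 (R p.2) ν = 0 :=
    h.sum_ePerp_sum_signedWeight_apply (Nat.lt_succ_of_le hν)
  rw [map_sub, map_sub, Pi.sub_apply, Pi.sub_apply, ← ePerp_succ_apply_of_colLen_le hν]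
  rw [Nat.sum_antidiagonal_succ', hR₀] at key
  cases a with
  | zero =>
    rw [ePerp_zero (Function.extend _ _ _), extend_addOne_apply_eq_zero (Nat.le_zero.1 hν)]
    rw [Nat.antidiagonal_zero, sum_singleton, zero_add, hR₁, map_neg, Pi.neg_apply] at key
    linarith
  | succ a =>
    rw [ePerp_extend_addOne_apply hν]
    have hlast : ∑ p ∈ antidiagonal a, ePerp p.1 (R (p.2 + 1 + 1)) ν = ePerp a (R 2) ν := by
      refine sum_eq_single_of_mem (a, 0) (by simp) fun ⟨i, j⟩ hij hne => ?_
      cases j with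
      | zero => exact absurd (by simpa using hij) hne
      | succ j => simp only [hR₃, map_zero, Pi.zero_apply]
    rw [Nat.sum_antidiagonal_succ', hlast, zero_add, hR₁, hR₂, map_neg, map_neg, Pi.neg_apply,
      Pi.neg_apply] at key
    linarith

end IsNet

end Net

/-! ### Counting fillings -/

section Fillings

variable {α : Type*} {R : Finset α → Finset α → Prop} {W : Finset α} {μ : ℕ → ℕ}
  {f : α → ℕ} {M i : ℕ}

/-- The elements of `W` that get a value at most `i`. -/
def sublevel (f : α → ℕ) (W : Finset α) (i : ℕ) : Finset α := {x ∈ W | f x ≤ i}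

lemma sublevel_eq_self (hf : ∀ x, f x ≤ i) : sublevel f W i = W :=
  filter_true_of_mem fun x _ => hf x

/-- The function that agrees with `f` where `f` is at most `M` and is zero elsewhere. -/
def truncate (M : ℕ) (f : α → ℕ) (x : α) : ℕ := if f x ≤ M then f x else 0

lemma truncate_le (M : ℕ) (f : α → ℕ) (x : α) : truncate M f x ≤ M := by
  rw [truncate]
  split_ifs with h
  exacts [h, M.zero_le]

lemma truncate_ne_zero_iff (hf : ∀ x, f x ≠ 0 ↔ x ∈ W) (x : α) :
    truncate M f x ≠ 0 ↔ x ∈ sublevel f W M := by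
  rw [truncate, sublevel, mem_filter, ← hf]
  grind

variable [DecidableEq α]

/-- The subsets of `W` related to it by `R` whose complement in `W` has `a` elements. -/
noncomputable def steps (R : Finset α → Finset α → Prop) (a : ℕ) (W : Finset α) :
    Finset (Finset α) :=
  {A ∈ W.powerset | #(W \ A) = a ∧ R W A}

/-- The function with value `M + 1` on `B` that agrees with `f` elsewhere. -/
def fillTop (M : ℕ) (B : Finset α) (f : α → ℕ) (x : α) : ℕ := if x ∈ B then M + 1 else f x

lemma sublevel_fillTop {A : Finset α} (hA : A ⊆ W) (hi : i ≤ M) :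
    sublevel (fillTop M (W \ A) f) W i = sublevel f A i := by
  ext x
  have := @hA x
  simp only [sublevel, fillTop, mem_filter]
  grind

lemma fillTop_truncate (hf : ∀ x, f x ≠ 0 ↔ x ∈ W) (hM : ∀ x, f x ≤ M + 1) :
    fillTop M (W \ sublevel f W M) (truncate M f) = f := by
  ext x
  have := hM x
  have := hf x
  simp only [fillTop, truncate, sublevel, mem_sdiff, mem_filter]
  grind

/-- The functions with support `W` and values at most `M` that take each value `i > 0` exactly `μ i`
times and whose consecutive sublevel sets are related by `R`; see `mem_fillings`. -/
noncomputable def fillings (R : Finset α → Finset α → Prop) (μ : ℕ → ℕ) :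
    ℕ → Finset α → Finset (α → ℕ)
  | 0, W => if W = ∅ then {0} else ∅
  | M + 1, W => ((steps R (μ (M + 1)) W).sigma (fillings R μ M)).image
      fun y => fillTop M (W \ y.1) y.2

lemma card_sublevel_succ_sdiff (f : α → ℕ) (W : Finset α) (i : ℕ) :
    #(sublevel f W (i + 1) \ sublevel f W i) = #{x ∈ W | f x = i + 1} := by
  congr 1
  ext x
  simp only [sublevel, mem_sdiff, mem_filter]
  grind

lemma mem_fillings : f ∈ fillings R μ M W ↔ (∀ x, f x ≠ 0 ↔ x ∈ W) ∧ (∀ x, f x ≤ M) ∧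
    ∀ i < M, sublevel f W i ∈ steps R (μ (i + 1)) (sublevel f W (i + 1)) := by
  induction M generalizing W f with
  | zero =>
    rw [fillings]
    split_ifs with hW
    · subst hW
      simp [funext_iff]
    · obtain ⟨x, hx⟩ := nonempty_iff_ne_empty.2 hW
      exact iff_of_false (notMem_empty f) fun h => (h.1 x).2 hx (Nat.le_zero.1 (h.2.1 x))
  | succ M ih =>
    simp only [fillings, mem_image, mem_sigma, ih, Sigma.exists, Nat.forall_lt_succ_right]
    constructor
    · rintro ⟨A, g, ⟨hstep, hsupp, hM, hg⟩, rfl⟩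
      have hAW : A ⊆ W := mem_powerset.1 (mem_filter.1 hstep).1
      have hle (x : α) : fillTop M (W \ A) g x ≤ M + 1 := by
        unfold fillTop
        grind
      refine ⟨fun x => ?_, hle, fun i hi => ?_, ?_⟩
      · have := @hAW x
        unfold fillTop
        grind
      · rw [sublevel_fillTop hAW hi.le, sublevel_fillTop hAW hi]
        exact hg i hi
      · rwa [sublevel_fillTop hAW le_rfl, sublevel_eq_self hle, sublevel_eq_self hM]
    · rintro ⟨hsupp, hM, hf, hstep⟩
      rw [sublevel_eq_self hM] at hstep
      have hAW : sublevel f W M ⊆ W := filter_subset _ _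
      have hfill := fillTop_truncate hsupp hM
      have hsub {i : ℕ} (hi : i ≤ M) :
          sublevel (truncate M f) (sublevel f W M) i = sublevel f W i := by
        rw [← sublevel_fillTop hAW hi, hfill]
      refine ⟨_, _, ⟨hstep, truncate_ne_zero_iff hsupp, truncate_le M f, fun i hi => ?_⟩, hfill⟩
      rw [hsub hi.le, hsub hi]
      exact hf i hi

lemma card_fillings_succ : #(fillings R μ (M + 1) W) =
    ∑ A ∈ steps R (μ (M + 1)) W, #(fillings R μ M A) := by
  rw [fillings, card_image_of_injOn, card_sigma]
  rintro ⟨A, f⟩ hA ⟨A', g⟩ hA' heq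
  simp only [coe_sigma, Set.mem_sigma_iff, mem_coe, mem_fillings] at hA hA' heq
  obtain ⟨hstep, hsupp, hM, -⟩ := hA
  obtain ⟨hstep', hsupp', hM', -⟩ := hA'
  obtain rfl : A = A' := by
    have := congrArg (sublevel · W M) heq
    simp only [steps, mem_filter, mem_powerset] at hstep hstep'
    simpa only [sublevel_fillTop hstep.1 le_rfl, sublevel_fillTop hstep'.1 le_rfl,
      sublevel_eq_self hM, sublevel_eq_self hM'] using this
  congr
  ext x
  have := congrFun heq x
  have := hsupp x
  have := hsupp' x
  unfold fillTop at *
  grind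

/-- `f` maps each exponent vector to the coefficient of its monomial in the symmetric function with
Schur expansion `c`. The first variable `x_0` does not occur. -/
structure HasSchurExpansion (f : (ℕ → ℕ) → ℚ) (c : YoungDiagram → ℚ) : Prop where
  eq_monomialCoeff : ∀ μ M, μ 0 = 0 → (∀ i > M, μ i = 0) →
    f μ = monomialCoeff ((List.range' 1 M).map μ) c
  support : ∀ μ, f μ ≠ 0 → μ 0 = 0 ∧ ∃ M, ∀ i > M, μ i = 0

variable {c : Finset α → YoungDiagram → ℚ}

lemma monomialCoeff_eq_card_fillings (hbot : ∀ W, c W ⊥ = if W = ∅ then 1 else 0)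
    (hstep : ∀ a W, hPerp a (c W) = ∑ A ∈ steps R a W, c A) (μ : ℕ → ℕ) (M : ℕ) (W : Finset α) :
    monomialCoeff ((List.range' 1 M).map μ) (c W) = #(fillings R μ M W) := by
  induction M generalizing W with
  | zero =>
    rw [List.range'_zero, List.map_nil, monomialCoeff_nil, hbot, fillings]
    split_ifs <;> simp
  | succ M ih =>
    rw [List.range'_1_concat, List.map_append, List.map_singleton, monomialCoeff_concat, hstep,
      map_sum, card_fillings_succ, Nat.cast_sum, add_comm 1 M]
    exact sum_congr rfl fun A _ => ih A

lemma mem_fillings_iff_forall (hR : R W W) (h0 : μ 0 = 0) (hM : ∀ i > M, μ i = 0) :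
    f ∈ fillings R μ M W ↔ ((∀ x, f x ≠ 0 ↔ x ∈ W) ∧
      ∀ i, R (sublevel f W (i + 1)) (sublevel f W i)) ∧ ∀ i, #{x ∈ W | f x = i} = μ i := by
  simp only [mem_fillings, steps, mem_filter, mem_powerset, card_sublevel_succ_sdiff]
  constructor
  · rintro ⟨hsupp, hle, hf⟩
    refine ⟨⟨hsupp, fun i => ?_⟩, fun i => ?_⟩
    · rcases lt_or_ge i M with hi | hi
      · exact (hf i hi).2.2
      · rwa [sublevel_eq_self fun x => (hle x).trans hi,
          sublevel_eq_self fun x => (hle x).trans (hi.trans i.le_succ)]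
    · rcases lt_or_ge M i with hi | hi
      · rw [hM i hi, card_eq_zero, filter_eq_empty_iff]
        exact fun x _ => ((hle x).trans_lt hi).ne
      · cases i with
        | zero =>
          rw [h0, card_eq_zero, filter_eq_empty_iff]
          exact fun x => (hsupp x).2
        | succ i => exact (hf i hi).2.1
  · rintro ⟨⟨hsupp, hf⟩, hμ⟩
    refine ⟨hsupp, fun x => ?_, fun i _ => ⟨?_, hμ _, hf i⟩⟩
    · by_contra! hx
      have := hμ (f x)
      rw [hM _ hx, card_eq_zero, filter_eq_empty_iff] at this
      exact this ((hsupp x).1 (Nat.ne_zero_of_lt hx)) rfl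
    · exact monotone_filter_right _ fun x _ h => Nat.le_succ_of_le h

lemma hasSchurExpansion_of_fillings (hbot : ∀ W, c W ⊥ = if W = ∅ then 1 else 0)
    (hstep : ∀ a W, hPerp a (c W) = ∑ A ∈ steps R a W, c A) (hR : R W W) {g : (ℕ → ℕ) → ℚ}
    (hg : ∀ μ, g μ = Nat.card {f : α → ℕ // ((∀ x, f x ≠ 0 ↔ x ∈ W) ∧
      ∀ i, R (sublevel f W (i + 1)) (sublevel f W i)) ∧ ∀ i, #{x ∈ W | f x = i} = μ i}) :
    HasSchurExpansion g (c W) where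
  eq_monomialCoeff μ M h0 hM := by
    rw [hg, monomialCoeff_eq_card_fillings hbot hstep,
      Nat.subtype_card _ fun f => mem_fillings_iff_forall hR h0 hM]
  support μ hμ := by
    rw [hg, Nat.cast_ne_zero] at hμ
    obtain ⟨⟨f, ⟨hsupp, -⟩, hf⟩⟩ := (Nat.card_ne_zero.1 hμ).1
    refine ⟨?_, W.sup f, fun i hi => ?_⟩
    · rw [← hf, card_eq_zero, filter_eq_empty_iff]
      exact fun x => (hsupp x).2
    · rw [← hf, card_eq_zero, filter_eq_empty_iff]
      exact fun x hx => ((le_sup hx).trans_lt hi).ne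

end Fillings

section SchurExpansion

variable {f g : (ℕ → ℕ) → ℚ} {c d : YoungDiagram → ℚ}

namespace HasSchurExpansion

lemma ext (hf : HasSchurExpansion f c) (hg : HasSchurExpansion g c) : f = g := by
  ext μ
  by_cases h : μ 0 = 0 ∧ ∃ M, ∀ i > M, μ i = 0
  · obtain ⟨h0, M, hM⟩ := h
    rw [hf.eq_monomialCoeff μ M h0 hM, hg.eq_monomialCoeff μ M h0 hM]
  · rw [not_imp_comm.1 (hf.support μ) h, not_imp_comm.1 (hg.support μ) h]

lemma unique (hc : HasSchurExpansion f c) (hd : HasSchurExpansion f d) : c = d :=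
  eq_of_forall_monomialCoeff_eq fun l => by
    set μ : ℕ → ℕ := fun i => if i = 0 then 0 else l.getD (i - 1) 0 with hμ
    have h0 : μ 0 = 0 := rfl
    have hM : ∀ i > l.length, μ i = 0 := fun i hi => by
      simp only [hμ]
      split_ifs
      exacts [rfl, List.getD_eq_default _ _ (by omega)]
    have hl : (List.range' 1 l.length).map μ = l :=
      List.ext_getElem (by simp) fun i _ hi => by simp [hμ, hi]
    rw [← hl, ← hc.eq_monomialCoeff μ _ h0 hM, hd.eq_monomialCoeff μ _ h0 hM]

lemma sum {ι : Type*} {s : Finset ι} {r : ι → ℚ} {f : ι → (ℕ → ℕ) → ℚ}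
    {c : ι → YoungDiagram → ℚ} (h : ∀ i ∈ s, HasSchurExpansion (f i) (c i)) :
    HasSchurExpansion (∑ i ∈ s, r i • f i) (∑ i ∈ s, r i • c i) where
  eq_monomialCoeff μ M h0 hM := by
    simp only [Finset.sum_apply, Pi.smul_apply, map_sum, map_smul]
    exact sum_congr rfl fun i hi => by rw [(h i hi).eq_monomialCoeff μ M h0 hM]
  support μ hμ := by
    rw [Finset.sum_apply] at hμ
    obtain ⟨i, hi, hne⟩ := exists_ne_zero_of_sum_ne_zero hμ
    rw [Pi.smul_apply] at hne
    exact (h i hi).support μ (right_ne_zero_of_smul hne)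

end HasSchurExpansion

end SchurExpansion

section Chromatic

variable {V : Type*} [DecidableEq V] {G : SimpleGraph V}

lemma sum_steps_eq_sum_stableSubsets (G : SimpleGraph V) (a : ℕ) (W : Finset V)
    (c : Finset V → YoungDiagram → ℚ) :
    ∑ A ∈ steps (fun W A => G.IsIndepSet (W \ A : Finset V)) a W, c A =
      ∑ T ∈ stableSubsets G a W, c (W \ T) := by
  refine sum_nbij' (W \ ·) (W \ ·) ?_ ?_ ?_ ?_ ?_ <;>
    simp +contextual [steps, mem_stableSubsets, sdiff_subset]

lemma isProperColoring_iff_sublevel [Fintype V] {f : V → ℕ} :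
    IsProperColoring G f ↔ (∀ v, f v ≠ 0 ↔ v ∈ univ) ∧
      ∀ i, G.IsIndepSet (sublevel f univ (i + 1) \ sublevel f univ i : Finset V) := by
  have hmem (i : ℕ) (v : V) :
      v ∈ sublevel f univ (i + 1) \ sublevel f univ i ↔ f v = i + 1 := by
    simp only [sublevel, mem_sdiff, mem_filter, mem_univ, true_and]
    omega
  simp only [IsProperColoring, SimpleGraph.IsIndepSet, Set.Pairwise, mem_coe, hmem, mem_univ,
    iff_true, Nat.pos_iff_ne_zero]
  refine and_congr_right fun hpos => ⟨fun h i u hu v hv _ huv => h u v huv (hu.trans hv.symm),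
    fun h u v huv heq => ?_⟩
  have hu := Nat.succ_pred_eq_of_ne_zero (hpos u)
  exact h _ hu.symm (heq.symm.trans hu.symm) huv.ne huv

theorem hasSchurExpansion_XCoeff [Fintype V] (G : SimpleGraph V) :
    HasSchurExpansion (XCoeff G) (chromaticSchur G univ) := by
  refine hasSchurExpansion_of_fillings (c := chromaticSchur G)
    (R := fun W A => G.IsIndepSet (W \ A : Finset V))
    (fun W => monomialCoeff_chromaticSchur G W []) (fun a W => ?_) ?_ fun μ => ?_
  · rw [hPerp_chromaticSchur, sum_steps_eq_sum_stableSubsets]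
  · simp [SimpleGraph.IsIndepSet]
  · refine congrArg Nat.cast (Nat.card_congr (Equiv.subtypeEquivRight fun f => ?_))
    simp only [isProperColoring_iff_sublevel, Nat.card_eq_fintype_card, Fintype.card_subtype]

end Chromatic

/-! ### Partitions -/

section Partitions

variable {N : ℕ} {lam : N.Partition} {κ : YoungDiagram}

/-- The Young diagram of a partition, as an element of Mathlib's type of Young diagrams. -/
def toDiagram (lam : N.Partition) : YoungDiagram :=
  .ofRowLens (lam.parts.sort (· ≤ ·)).reverse (lam.parts.pairwise_sort _).sortedLE.reverse

lemma mem_diag {x : ℕ × ℕ} : x ∈ _root_.diag lam ↔ x ∈ toDiagram lam := by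
  rw [toDiagram, YoungDiagram.mem_ofRowLens, _root_.diag, Set.mem_ofPred_eq, rowLen]
  constructor
  · intro h
    by_cases hx : x.1 < (lam.parts.sort (· ≤ ·)).reverse.length
    · exact ⟨hx, by rwa [List.getD_eq_getElem _ _ hx] at h⟩
    · rw [List.getD_eq_default _ _ (not_lt.1 hx)] at h
      exact absurd h (Nat.not_lt_zero _)
  · rintro ⟨hx, h⟩
    rwa [List.getD_eq_getElem _ _ hx]

lemma toDiagram_eq_iff : toDiagram lam = κ ↔ lam.parts = κ.rowLens := by
  constructor
  · rintro rfl
    rw [toDiagram, YoungDiagram.rowLens_ofRowLens_eq_self, Multiset.coe_reverse,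
      Multiset.sort_eq]
    intro x hx
    rw [List.mem_reverse, Multiset.mem_sort] at hx
    exact lam.parts_pos hx
  · intro h
    have hsort : (lam.parts.sort (· ≤ ·)).reverse = κ.rowLens :=
      ((List.reverse_perm _).trans (Multiset.coe_eq_coe.1 ((Multiset.sort_eq _ _).trans h)))
        |>.eq_of_pairwise' (lam.parts.pairwise_sort _).sortedLE.reverse.pairwise
          κ.rowLens_sorted.pairwise
    simp only [toDiagram, hsort, YoungDiagram.ofRowLens_to_rowLens_eq_self]

lemma parts_eq_rowLens_toDiagram (lam : N.Partition) :
    lam.parts = (toDiagram lam).rowLens := toDiagram_eq_iff.1 rfl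

lemma toDiagram_injective : Function.Injective (toDiagram : N.Partition → YoungDiagram) :=
  fun _ _ h => Nat.Partition.ext (by rw [toDiagram_eq_iff.1 h, ← parts_eq_rowLens_toDiagram])

lemma card_toDiagram (lam : N.Partition) : (toDiagram lam).card = N := by
  rw [← sum_rowLens, ← Multiset.sum_coe, ← parts_eq_rowLens_toDiagram, lam.parts_sum]

lemma exists_toDiagram_eq (h : κ.card = N) : ∃ lam : N.Partition, toDiagram lam = κ :=
  ⟨⟨κ.rowLens, fun hi => κ.pos_of_mem_rowLens _ hi,
    by rw [Multiset.sum_coe, sum_rowLens, h]⟩, toDiagram_eq_iff.2 rfl⟩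

lemma rowLens_addOne (κ : YoungDiagram) : (addOne κ).rowLens = κ.rowLens ++ [1] := by
  have hcol : (addOne κ).colLen 0 = κ.colLen 0 + 1 := by
    rw [addOne, YoungDiagram.colLen_transpose, rowLen_zero_addBox, YoungDiagram.rowLen_transpose]
  rw [YoungDiagram.rowLens, hcol, List.range_succ, List.map_append, List.map_singleton,
    YoungDiagram.rowLens]
  congr 1
  · refine List.map_congr_left fun i hi => rowLen_eq_of_forall_mem_iff fun j => ?_
    rw [mem_addOne, YoungDiagram.mem_iff_lt_rowLen, Prod.mk.injEq,
      or_iff_right fun h => (List.mem_range.1 hi).ne h.1]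
  · refine congrArg List.singleton (rowLen_eq_of_forall_mem_iff fun j => ?_)
    rw [mem_addOne, YoungDiagram.mem_iff_lt_rowLen, Prod.mk.injEq,
      rowLen_eq_zero_of_colLen_le le_rfl]
    omega

lemma toDiagram_eq_addOne_iff {N' : ℕ} {lam' : N'.Partition} :
    toDiagram lam = addOne (toDiagram lam') ↔ lam.parts = 1 ::ₘ lam'.parts := by
  rw [toDiagram_eq_iff, rowLens_addOne, ← Multiset.coe_add, ← parts_eq_rowLens_toDiagram, add_comm]
  rfl

lemma one_mem_parts_of_addOne_eq_toDiagram (h : addOne κ = toDiagram lam) : 1 ∈ lam.parts := by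
  rw [toDiagram_eq_iff.1 h.symm, rowLens_addOne]
  simp

lemma removeOnes_parts {t : ℕ} (h : t ≤ lam.parts.count 1) :
    (removeOnes lam t).parts = lam.parts - Multiset.replicate t 1 := by
  rw [removeOnes, dif_pos (Multiset.le_count_iff_replicate_le.1 h)]

lemma toDiagram_removeOnes_zero (lam : N.Partition) :
    toDiagram (removeOnes lam 0) = toDiagram lam := by
  rw [toDiagram_eq_iff, removeOnes_parts (Nat.zero_le _), Multiset.replicate_zero, tsub_zero,
    parts_eq_rowLens_toDiagram]

lemma toDiagram_removeOnes {t : ℕ} (h : t < lam.parts.count 1) :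
    toDiagram (removeOnes lam t) = addOne (toDiagram (removeOnes lam (t + 1))) := by
  rw [toDiagram_eq_addOne_iff, removeOnes_parts h.le, removeOnes_parts h]
  ext a
  simp only [Multiset.count_cons, Multiset.count_sub, Multiset.count_replicate]
  grind

lemma extend_addOne_apply_toDiagram_removeOnes_one (h : 1 ∈ lam.parts) (c : YoungDiagram → ℚ) :
    Function.extend addOne c 0 (toDiagram (removeOnes lam 1)) =
      if 2 ≤ lam.parts.count 1 then c (toDiagram (removeOnes lam 2)) else 0 := by
  split_ifs with h2
  · rw [toDiagram_removeOnes h2, addOne_injective.extend_apply]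
  · refine Function.extend_apply' _ _ _ fun ⟨κ, hκ⟩ => h2 ?_
    have hone := one_mem_parts_of_addOne_eq_toDiagram hκ
    rw [removeOnes_parts (Multiset.one_le_count_iff_mem.2 h), ← Multiset.one_le_count_iff_mem,
      Multiset.count_sub, Multiset.count_replicate_self] at hone
    omega

end Partitions

/-! ### Schur functions -/

section Schur

variable {N : ℕ} {lam : N.Partition} {t : ℕ × ℕ → ℕ} {A W : Finset (ℕ × ℕ)}

/-- `W` and `A` are the sets of cells of two Young diagrams that differ by a horizontal strip. -/
def IsStripStep (W A : Finset (ℕ × ℕ)) : Prop :=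
  ∃ κ ν : YoungDiagram, κ.cells = W ∧ ν.cells = A ∧ IsHorizontalStrip κ ν

/-- The indicator of the Young diagram with set of cells `W`; zero if `W` is not one. -/
noncomputable def indicatorCells (W : Finset (ℕ × ℕ)) (κ : YoungDiagram) : ℚ :=
  if κ.cells = W then 1 else 0

lemma isStripStep_cells_iff {κ ν : YoungDiagram} :
    IsStripStep κ.cells ν.cells ↔ IsHorizontalStrip κ ν := by
  refine ⟨?_, fun h => ⟨κ, ν, rfl, rfl, h⟩⟩
  rintro ⟨κ', ν', hκ, hν, h⟩
  rwa [← YoungDiagram.ext hκ, ← YoungDiagram.ext hν]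

lemma hPerp_indicatorCells (a : ℕ) (W : Finset (ℕ × ℕ)) :
    hPerp a (indicatorCells W) = ∑ A ∈ steps IsStripStep a W, indicatorCells A := by
  ext ν
  have hsum : (∑ A ∈ steps IsStripStep a W, indicatorCells A) ν =
      if ν.cells ∈ steps IsStripStep a W then 1 else 0 := by
    simp only [Finset.sum_apply, indicatorCells, sum_ite_eq]
  rw [hsum, hPerp, stripPerp_apply]
  by_cases hW : ∃ κ : YoungDiagram, κ.cells = W
  · obtain ⟨κ, rfl⟩ := hW
    have heq (κ' : YoungDiagram) : indicatorCells κ.cells κ' = if κ' = κ then 1 else 0 := by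
      simp only [indicatorCells, YoungDiagram.ext_iff]
    simp only [heq, sum_ite_eq', mem_filter, mem_diagramsOfCard, steps, mem_powerset,
      isStripStep_cells_iff]
    refine if_congr ⟨fun ⟨hcard, h⟩ => ⟨h.le, ?_, h⟩, fun ⟨_, hcard, h⟩ => ⟨?_, h⟩⟩ rfl rfl
    all_goals
      have := card_sdiff_add_card_eq_card (YoungDiagram.cells_subset_iff.2 h.le)
      simp only [YoungDiagram.card] at *
      omega
  · rw [sum_eq_zero fun κ _ => show indicatorCells W κ = 0 from if_neg fun h => hW ⟨κ, h⟩,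
      if_neg]
    intro h
    obtain ⟨-, -, κ, -, hκ, -⟩ := mem_filter.1 h
    exact hW ⟨κ, hκ⟩

lemma isLowerSet_sublevel (h : IsSSYT lam t) (i : ℕ) :
    IsLowerSet (sublevel t (toDiagram lam).cells i : Set (ℕ × ℕ)) := by
  obtain ⟨-, -, hrow, hcol⟩ := h
  simp only [mem_diag] at hrow hcol
  have hrow' {r j j' : ℕ} (hj : j ≤ j') (hmem : (r, j') ∈ toDiagram lam) :
      t (r, j) ≤ t (r, j') := by
    induction hj with
    | refl => rfl
    | @step j' _ ih =>
      exact (ih ((toDiagram lam).up_left_mem le_rfl j'.le_succ hmem)).trans (hrow r j' hmem)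
  have hcol' {r r' j : ℕ} (hr : r ≤ r') (hmem : (r', j) ∈ toDiagram lam) :
      t (r, j) ≤ t (r', j) := by
    induction hr with
    | refl => rfl
    | @step r' _ ih =>
      exact (ih ((toDiagram lam).up_left_mem r'.le_succ le_rfl hmem)).trans (hcol r' j hmem).le
  rintro ⟨r', j'⟩ ⟨r, j⟩ ⟨hr, hj⟩ hmem
  simp only [sublevel, coe_filter, Set.mem_ofPred_eq, YoungDiagram.mem_cells] at hmem ⊢
  exact ⟨(toDiagram lam).up_left_mem hr hj hmem.1,
    ((hcol' hr ((toDiagram lam).up_left_mem le_rfl hj hmem.1)).trans (hrow' hj hmem.1)).trans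
      hmem.2⟩

lemma isStripStep_of_isSSYT (h : IsSSYT lam t) (i : ℕ) :
    IsStripStep (sublevel t (toDiagram lam).cells (i + 1))
      (sublevel t (toDiagram lam).cells i) := by
  refine ⟨⟨_, isLowerSet_sublevel h (i + 1)⟩, ⟨_, isLowerSet_sublevel h i⟩, rfl, rfl,
    ⟨fun x hx => ?_, fun {r j} hx => ?_⟩⟩
  · obtain ⟨hx, hi⟩ := mem_filter.1 hx
    exact mem_filter.2 ⟨hx, hi.trans i.le_succ⟩
  · obtain ⟨hx, hi⟩ := mem_filter.1 hx
    exact mem_filter.2 ⟨(toDiagram lam).up_left_mem r.le_succ le_rfl hx,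
      Nat.le_of_lt_succ ((h.2.2.2 r j (mem_diag.2 hx)).trans_le hi)⟩

lemma isSSYT_iff : IsSSYT lam t ↔ (∀ x, t x ≠ 0 ↔ x ∈ (toDiagram lam).cells) ∧
    ∀ i, IsStripStep (sublevel t (toDiagram lam).cells (i + 1))
      (sublevel t (toDiagram lam).cells i) := by
  constructor
  · intro h
    refine ⟨fun x => ⟨fun hx => ?_, fun hx => ?_⟩, isStripStep_of_isSSYT h⟩
    · rw [YoungDiagram.mem_cells, ← mem_diag]
      exact not_imp_comm.1 (h.1 x) hx
    · rw [YoungDiagram.mem_cells, ← mem_diag] at hx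
      exact (h.2.1 x hx).ne'
  · rintro ⟨hsupp, hstep⟩
    simp only [IsSSYT, mem_diag, ← YoungDiagram.mem_cells, Nat.pos_iff_ne_zero]
    refine ⟨fun x hx => not_imp_comm.1 (hsupp x).1 hx, fun x => (hsupp x).2,
      fun r j hx => ?_, fun r j hx => ?_⟩
    all_goals
      obtain ⟨v, hv⟩ := Nat.exists_eq_succ_of_ne_zero ((hsupp _).2 hx)
      obtain ⟨κ, ν, hκ, hν, hstrip⟩ := hstep v
      have hmem : _ ∈ sublevel t (toDiagram lam).cells (v + 1) := mem_filter.2 ⟨hx, hv.le⟩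
      rw [← hκ] at hmem
    · have hleft : (r, j) ∈ κ.cells := κ.up_left_mem le_rfl j.le_succ hmem
      rw [hκ] at hleft
      exact (mem_filter.1 hleft).2.trans hv.ge
    · have habove : (r, j) ∈ ν.cells := hstrip.above_mem hmem
      rw [hν] at habove
      exact (Nat.lt_succ_of_le (mem_filter.1 habove).2).trans_eq hv.symm

theorem hasSchurExpansion_schurFn (lam : N.Partition) :
    HasSchurExpansion (schurFn lam) (indicatorCells (toDiagram lam).cells) := by
  refine hasSchurExpansion_of_fillings (c := indicatorCells)
    (fun W => by simp [indicatorCells, eq_comm]) hPerp_indicatorCells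
    (isStripStep_cells_iff.2 (isHorizontalStrip_self _)) fun μ => ?_
  refine congrArg Nat.cast (Nat.card_congr (Equiv.subtypeEquivRight fun t => ?_))
  have hcard (i : ℕ) : Nat.card {x // x ∈ _root_.diag lam ∧ t x = i} =
      #{x ∈ (toDiagram lam).cells | t x = i} :=
    Nat.subtype_card _ fun x => by rw [mem_filter, YoungDiagram.mem_cells, mem_diag]
  simp only [isSSYT_iff, hcard]

lemma sum_smul_indicatorCells_apply (r : N.Partition → ℚ) (lam : N.Partition) :
    (∑ ν, r ν • indicatorCells (toDiagram ν).cells) (toDiagram lam) = r lam := by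
  simp [Finset.sum_apply, indicatorCells, ← YoungDiagram.ext_iff, toDiagram_injective.eq_iff]

lemma hasSchurExpansion_finsuppSum (r : N.Partition →₀ ℚ) :
    HasSchurExpansion (fun μ => r.sum fun ν a => a * schurFn ν μ)
      (∑ ν, r ν • indicatorCells (toDiagram ν).cells) := by
  convert HasSchurExpansion.sum (r := r) fun ν (_ : ν ∈ univ) => hasSchurExpansion_schurFn ν
  simp [Finset.sum_apply, Finsupp.sum_fintype]

theorem sCoeff_eq_of_hasSchurExpansion {f : (ℕ → ℕ) → ℚ} {c : YoungDiagram → ℚ}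
    (hf : HasSchurExpansion f c) (hc : ∀ κ, κ.card ≠ N → c κ = 0) (lam : N.Partition) :
    sCoeff f lam = c (toDiagram lam) := by
  have hex : ∃ r : N.Partition →₀ ℚ, ∀ μ, f μ = r.sum fun ν a => a * schurFn ν μ := by
    refine ⟨Finsupp.equivFunOnFinite.symm fun ν => c (toDiagram ν), congrFun (hf.ext ?_)⟩
    convert hasSchurExpansion_finsuppSum _
    ext κ
    by_cases hκ : κ.card = N
    · obtain ⟨lam, rfl⟩ := exists_toDiagram_eq hκ
      rw [sum_smul_indicatorCells_apply, Finsupp.equivFunOnFinite_symm_apply_apply]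
    · rw [hc κ hκ, Finset.sum_apply, sum_eq_zero]
      rintro ν -
      have hne : κ.cells ≠ (toDiagram ν).cells := fun h =>
        hκ ((congrArg card h).trans (card_toDiagram ν))
      rw [Pi.smul_apply, indicatorCells, if_neg hne, smul_zero]
  have hchoose := hasSchurExpansion_finsuppSum hex.choose
  rw [← funext hex.choose_spec] at hchoose
  rw [sCoeff, dif_pos hex, hf.unique hchoose, sum_smul_indicatorCells_apply]

theorem sCoeff_XCoeff {V : Type*} [Fintype V] [DecidableEq V] (G : SimpleGraph V)
    (hN : Fintype.card V = N) (lam : N.Partition) :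
    sCoeff (XCoeff G) lam = chromaticSchur G univ (toDiagram lam) :=
  sCoeff_eq_of_hasSchurExpansion (hasSchurExpansion_XCoeff G)
    (fun κ hκ => chromaticSchur_eq_zero_of_card_ne (by rwa [card_univ, hN])) lam

end Schur

/-! ### Generalized nets -/

section GenNet

variable {n m : ℕ}

lemma genNet_adj_inl_inl {i j : Fin n} : (genNet n m).Adj (.inl i) (.inl j) ↔ i ≠ j := by
  simp [genNet, SimpleGraph.fromRel_adj]

lemma genNet_adj_inl_inr {i : Fin n} {j : Fin m} :
    (genNet n m).Adj (.inl i) (.inr j) ↔ (i : ℕ) = j := by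
  simp [genNet, SimpleGraph.fromRel_adj]

lemma genNet_adj_inr_inl {i : Fin m} {j : Fin n} :
    (genNet n m).Adj (.inr i) (.inl j) ↔ (i : ℕ) = j := by
  rw [SimpleGraph.adj_comm, genNet_adj_inl_inr, eq_comm]

lemma not_genNet_adj_inr_inr {i j : Fin m} : ¬(genNet n m).Adj (.inr i) (.inr j) := by
  simp [genNet, SimpleGraph.fromRel_adj]

/-- The body vertices of a generalized net. -/
def body (n m : ℕ) : Finset (Fin n ⊕ Fin m) := univ.map .inl

lemma compl_body : (body n m)ᶜ = univ.map .inr := by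
  ext (i | j) <;> simp [body]

/-- The anchor of each pendant vertex of a generalized net. -/
def anchor (h : m ≤ n) : Fin n ⊕ Fin m → Fin n ⊕ Fin m := Sum.elim .inl (.inl ∘ Fin.castLE h)

lemma isNet_genNet (h : m ≤ n) : IsNet (genNet n m) (body n m) (anchor h) where
  isClique := by
    rintro (i | i) hi (j | j) hj hij <;> simp_all [body, genNet_adj_inl_inl]
  anchor_mem := by
    rintro (i | i) hi <;> simp [body, anchor]
  adj_iff := by
    rintro (i | i) hi (j | j) <;>
      simp_all [body, anchor, genNet_adj_inr_inl, not_genNet_adj_inr_inr, Fin.ext_iff, eq_comm]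
  injOn_anchor := by
    rintro (i | i) hi (j | j) hj <;> simp_all [body, anchor]

/-- The embedding of generalized nets induced by compatible embeddings of the bodies and of the
sets of pendant vertices. -/
def genNetEmbedding {n' m' : ℕ} (f : Fin n ↪ Fin n') (g : Fin m ↪ Fin m')
    (h : ∀ i j, (f i : ℕ) = g j ↔ (i : ℕ) = j) : genNet n m ↪g genNet n' m' where
  toEmbedding := f.sumMap g
  map_rel_iff' {u v} := by
    rcases u with i | i <;> rcases v with j | j <;>
      simp [genNet_adj_inl_inl, genNet_adj_inl_inr, genNet_adj_inr_inl, not_genNet_adj_inr_inr, h,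
        eq_comm]

/-- The embedding of `G ⊔ K_1` that extends an embedding of `G` by a vertex without neighbors in its
image. -/
def disjUnionK1Embedding {V V' : Type*} {G : SimpleGraph V} {G' : SimpleGraph V'} (φ : G ↪g G')
    (v : V') (hne : ∀ u, φ u ≠ v) (hadj : ∀ u, ¬G'.Adj (φ u) v) :
    _root_.disjUnion G K1 ↪g G' where
  toFun := Sum.elim φ fun _ => v
  inj' := φ.injective.sumElim (fun _ _ _ => Subsingleton.elim _ _) fun u _ => hne u
  map_rel_iff' {u w} := by
    have hadj' (u : V) : ¬G'.Adj v (φ u) := fun h => hadj u h.symm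
    have hinl (u w : V) : (_root_.disjUnion G K1).Adj (.inl u) (.inl w) ↔ G.Adj u w := by
      simpa [_root_.disjUnion, G.adj_comm w] using fun h : G.Adj u w => h.ne
    rcases u with u | u <;> rcases w with w | w
    · exact φ.map_adj_iff.trans (hinl u w).symm
    all_goals simp [_root_.disjUnion, K1, hadj, hadj']

lemma val_succAbove_eq_val_succAbove_iff {a : Fin (n + 1)} {b : Fin (m + 1)} (h : (a : ℕ) = b)
    (i : Fin n) (j : Fin m) : (a.succAbove i : ℕ) = b.succAbove j ↔ (i : ℕ) = j := by
  simp only [Fin.succAbove, Fin.lt_def, Fin.val_castSucc]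
  split_ifs <;> simp only [Fin.val_castSucc, Fin.val_succ] <;> omega

lemma val_succAbove_eq_val_iff {a : Fin (n + 1)} (h : m ≤ a) (i : Fin n) (j : Fin m) :
    (a.succAbove i : ℕ) = j ↔ (i : ℕ) = j := by
  simp only [Fin.succAbove, Fin.lt_def, Fin.val_castSucc]
  split_ifs
  · rw [Fin.val_castSucc]
  · rw [Fin.val_succ]
    omega

lemma chromaticSchur_eq_of_map_univ_eq {V V' : Type*} [DecidableEq V] [Fintype V'] [DecidableEq V']
    {G : SimpleGraph V} {G' : SimpleGraph V'} {W : Finset V} (φ : G' ↪g G)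
    (h : univ.map φ.toEmbedding = W) : chromaticSchur G W = chromaticSchur G' univ := by
  rw [← h, chromaticSchur_map]

lemma chromaticSchur_genNet_compl_buoy {b : Fin (n + 1)} (hb : m ≤ b) :
    chromaticSchur (genNet (n + 1) m) {.inl b}ᶜ = chromaticSchur (genNet n m) univ := by
  refine chromaticSchur_eq_of_map_univ_eq
    (genNetEmbedding b.succAboveEmb (.refl _) (val_succAbove_eq_val_iff hb)) ?_
  ext (i | j) <;> simp [genNetEmbedding, Fin.exists_succAbove_eq_iff]

/-- The embedding of the net `GN_{n,m}` in `GN_{n+1,m+1}` that misses the pendant vertex `j` and its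
anchor `i`. -/
def succAboveEmbedding {i : Fin (n + 1)} {j : Fin (m + 1)} (h : (i : ℕ) = j) :
    genNet n m ↪g genNet (n + 1) (m + 1) :=
  genNetEmbedding i.succAboveEmb j.succAboveEmb (val_succAbove_eq_val_succAbove_iff h)

lemma chromaticSchur_genNet_compl_pair {i : Fin (n + 1)} {j : Fin (m + 1)} (h : (i : ℕ) = j) :
    chromaticSchur (genNet (n + 1) (m + 1)) {.inr j, .inl i}ᶜ =
      chromaticSchur (genNet n m) univ := by
  refine chromaticSchur_eq_of_map_univ_eq (succAboveEmbedding h) ?_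
  ext (k | k) <;> simp [succAboveEmbedding, genNetEmbedding, Fin.exists_succAbove_eq_iff]

lemma chromaticSchur_genNet_compl_anchor {i : Fin (n + 1)} {j : Fin (m + 1)} (h : (i : ℕ) = j) :
    chromaticSchur (genNet (n + 1) (m + 1)) {.inl i}ᶜ =
      chromaticSchur (_root_.disjUnion (genNet n m) K1) univ := by
  refine chromaticSchur_eq_of_map_univ_eq
    (disjUnionK1Embedding (succAboveEmbedding h) (.inr j) ?_ ?_) ?_
  · rintro (k | k) <;> simp [succAboveEmbedding, genNetEmbedding]
  · rintro (k | k)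
    · have (hk : (i.succAbove k : ℕ) = j) : False := i.succAbove_ne k (Fin.ext (hk.trans h.symm))
      simpa [succAboveEmbedding, genNetEmbedding, genNet_adj_inl_inr]
    · exact not_genNet_adj_inr_inr
  · ext (k | k)
    · simp [disjUnionK1Embedding, succAboveEmbedding, genNetEmbedding, Fin.exists_succAbove_eq_iff]
    · simp [disjUnionK1Embedding, succAboveEmbedding, genNetEmbedding, @eq_comm _ j k,
        Fin.exists_succAbove_eq_iff, or_comm, em]

theorem chromaticSchur_genNet_addOne (h : m ≤ n) (κ : YoungDiagram) :
    chromaticSchur (genNet (n + 1) (m + 1)) univ (addOne κ) =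
      (m + 1 : ℕ) * chromaticSchur (_root_.disjUnion (genNet n m) K1) univ κ +
        (n - m : ℕ) * chromaticSchur (genNet n (m + 1)) univ κ +
        (m + 1 : ℕ) * Function.extend addOne (chromaticSchur (genNet n m) univ) 0 κ := by
  have hbody (i : Fin (n + 1)) : chromaticSchur (genNet (n + 1) (m + 1)) {.inl i}ᶜ κ =
      if (i : ℕ) < m + 1 then chromaticSchur (_root_.disjUnion (genNet n m) K1) univ κ
      else chromaticSchur (genNet n (m + 1)) univ κ := by
    split_ifs with hi
    · rw [chromaticSchur_genNet_compl_anchor (n := n) (j := ⟨i, hi⟩) rfl]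
    · rw [chromaticSchur_genNet_compl_buoy (not_lt.1 hi)]
  have hcard : #{i : Fin (n + 1) | (i : ℕ) < m + 1} = m + 1 := by
    rw [Fin.card_filter_val_lt, min_eq_right (Nat.succ_le_succ h)]
  have hcard' : #{i : Fin (n + 1) | ¬(i : ℕ) < m + 1} = n - m := by
    rw [filter_not, ← compl_eq_univ_sdiff, card_compl, hcard, Fintype.card_fin,
      Nat.add_sub_add_right]
  rw [(isNet_genNet (Nat.succ_le_succ h)).chromaticSchur_addOne, compl_body, body, sum_map, sum_map]
  congr 1
  · simp only [Function.Embedding.inl_apply, hbody, sum_ite, sum_const, hcard, hcard', nsmul_eq_mul]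
  · have hpair (j : Fin (m + 1)) : chromaticSchur (genNet (n + 1) (m + 1))
        {.inr j, anchor (Nat.succ_le_succ h) (.inr j)}ᶜ = chromaticSchur (genNet n m) univ :=
      chromaticSchur_genNet_compl_pair rfl
    simp only [Function.Embedding.inr_apply, hpair, sum_const, card_univ, Fintype.card_fin,
      nsmul_eq_mul]

end GenNet

end ChromaticSchur

open ChromaticSchur

/-- For `n ≥ m ≥ 1` and a partition `lam` of `n + m` whose smallest
part is `1`:
`[s_lam] X_{GN_{n,m}} = m·[s_{lam∖1}] X_{GN_{n-1,m-1} ⊔ K₁}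
  + (n-m)·[s_{lam∖1}] X_{GN_{n-1,m}} + m·A`,
where `A = [s_{lam∖1²}] X_{GN_{n-1,m-1}}` if `lam` has at least two parts equal to
`1`, and `A = 0` otherwise. -/
theorem schurCoeff_genNet_recurrence (n m : ℕ) (hm : 1 ≤ m) (hmn : m ≤ n)
    (lam : Nat.Partition (n + m)) (hlast : 1 ∈ lam.parts) :
    sCoeff (XCoeff (genNet n m)) lam =
      (m : ℚ) * sCoeff (XCoeff (disjUnion (genNet (n - 1) (m - 1)) K1))
          (removeOnes lam 1)
      + ((n - m : ℕ) : ℚ) * sCoeff (XCoeff (genNet (n - 1) m)) (removeOnes lam 1)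
      + (m : ℚ) * (if 2 ≤ lam.parts.count 1
          then sCoeff (XCoeff (genNet (n - 1) (m - 1))) (removeOnes lam 2)
          else 0) := by
  obtain ⟨m, rfl⟩ := Nat.exists_eq_add_of_le' hm
  obtain ⟨n, rfl⟩ := Nat.exists_eq_add_of_le' (hm.trans hmn)
  have hlam : toDiagram lam = addOne (toDiagram (removeOnes lam 1)) :=
    (toDiagram_removeOnes_zero lam).symm.trans
      (toDiagram_removeOnes (Multiset.count_pos.2 hlast))
  have hextend := extend_addOne_apply_toDiagram_removeOnes_one hlast
    (chromaticSchur (genNet n m) Finset.univ)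
  rw [sCoeff_XCoeff, sCoeff_XCoeff, sCoeff_XCoeff, sCoeff_XCoeff, hlam, n.add_sub_add_right 1 m,
    n.add_sub_cancel, m.add_sub_cancel, ← hextend,
    chromaticSchur_genNet_addOne (Nat.le_of_succ_le_succ hmn)]
  all_goals simp only [Fintype.card_sum, Fintype.card_fin] <;> omega
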